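/- For all ε > 0 there exists L > 0 with the following property. For any finite nonempty set A ⊆ 𝔽₂ⁿ (any n), writing η for the real number defined by |A+A| = |A|^{2−η}, there exists a subspace V ⊆ 𝔽₂ⁿ such that |V| ≤ |A|^L and 𝔼_{a∼𝐔_A} log |A ∩ (V + a)| ≥ (η − ε) log |A|, where 𝐔_A is uniformly distributed on A. -/

import Mathlib

open Real Pointwise

noncomputable section

abbrev Fvec (n : ℕ) : Type := Fin n → ZMod 2

/-- Shannon entropy (natural log) of a finitely supported distribution. -/
def ent {A : Type*} (p : A → ℝ) : ℝ := ∑ᶠ a, Real.negMulLog (p a)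

/-- `p` is a (finitely supported) probability distribution. -/
def IsDist {A : Type*} (p : A → ℝ) : Prop := (∀ a, 0 ≤ p a) ∧ ∑ᶠ a, p a = 1

/-- Pushforward of a distribution along a map: the distribution of `f(X)` for `X ∼ p`. -/
def push {A B : Type*} (f : A → B) (p : A → ℝ) : B → ℝ := fun b => ∑ᶠ a ∈ f ⁻¹' {b}, p a

/-- Joint distribution of a pair of independent random variables. -/
def prodDist {A B : Type*} (p : A → ℝ) (q : B → ℝ) : A × B → ℝ := fun z => p z.1 * q z.2

/-- Distribution of `X + Y` for independent `X ∼ p`, `Y ∼ q`. -/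
def conv {A : Type*} [AddGroup A] (p q : A → ℝ) : A → ℝ := fun z => ∑ᶠ x, p x * q (z - x)

/-- The distribution of `X` conditioned on `U = b`, where `r` is the joint distribution of `(X, U)`. -/
def fiber {A B : Type*} (r : A × B → ℝ) (b : B) : A → ℝ := fun a => r (a, b) / push Prod.snd r b

/-- Conditional entropy `H[X | U]` of a joint distribution `r` of `(X, U)`. -/
def condEnt {A B : Type*} (r : A × B → ℝ) : ℝ := ∑ᶠ b, push Prod.snd r b * ent (fiber r b)

/-- Doubling mass `s[X ; Y]` (of independent copies with distributions `p`, `q`). -/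
def sDouble {A : Type*} [AddGroup A] (p q : A → ℝ) : ℝ := ent p + ent q - ent (conv p q)

/-- Conditional doubling mass `s[X | U ; Y | W] = 𝔼_{u ∼ U, w ∼ W} s[X_u ; Y_w]`,
where `r1`, `r2` are the joint distributions of `(X, U)` and `(Y, W)`. -/
def sCond {A U W : Type*} [AddGroup A] (r1 : A × U → ℝ) (r2 : A × W → ℝ) : ℝ :=
  ∑ᶠ u, ∑ᶠ w, push Prod.snd r1 u * push Prod.snd r2 w * sDouble (fiber r1 u) (fiber r2 w)

/-- Conditional mutual information `I[A : B | S]` of a joint distribution of `(A, B, S)`. -/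
def condMI {A B S : Type*} (r : A × B × S → ℝ) : ℝ :=
  ent (push (fun z => (z.1, z.2.2)) r) + ent (push (fun z => z.2) r)
    - ent r - ent (push (fun z => z.2.2) r)

/-- Uniform distribution on a set. -/
def unifOn {A : Type*} (s : Set A) : A → ℝ := s.indicator fun _ => (Nat.card s : ℝ)⁻¹

/-- Entropic Ruzsa distance `d[X ; Y]`. -/
def dRuzsa {A : Type*} [AddGroup A] (p q : A → ℝ) : ℝ := ent (conv p q) - ent p / 2 - ent q / 2

/-- Joint distribution of `(X, X + Y)` for independent `X ∼ p`, `Y ∼ q`. -/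
def jointSum {A : Type*} [AddGroup A] (p q : A → ℝ) : A × A → ℝ :=
  push (fun z : A × A => (z.1, z.1 + z.2)) (prodDist p q)

/-- Joint distribution of `(X, π_V(X))`. -/
def selfProj {n : ℕ} (V : Submodule (ZMod 2) (Fvec n)) (p : Fvec n → ℝ) :
    Fvec n × (Fvec n ⧸ V) → ℝ := push (fun x => (x, V.mkQ x)) p

/-- Joint distribution of independent `(X₁, X₂, Y₁, Y₂)` with `X₁, X₂ ∼ p` and `Y₁, Y₂ ∼ q`. -/
def quad {A : Type*} (p q : A → ℝ) : A × A × A × A → ℝ :=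
  fun z => p z.1 * p z.2.1 * q z.2.2.1 * q z.2.2.2

/-- Distribution of `X₁ + ⋯ + X_k` for independent `Xᵢ ∼ p i`. -/
def indepSum {A : Type*} [AddCommGroup A] (k : ℕ) (p : Fin k → A → ℝ) : A → ℝ :=
  push (fun x : Fin k → A => ∑ i, x i) (fun x => ∏ i, p i (x i))

/-- Statement `A(η, L, c)` from the paper. -/
def StA (η L c : ℝ) : Prop :=
  ∀ (n : ℕ) (p q : Fvec n → ℝ), IsDist p → IsDist q →
    ent (conv p q) ≤ (1 - η) * (ent p + ent q) →
    ∃ V : Submodule (ZMod 2) (Fvec n),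
      ent (unifOn (V : Set (Fvec n))) ≤ L * (ent p + ent q) ∧
      ent (push V.mkQ p) + ent (push V.mkQ q) ≤ (1 - c) * (ent p + ent q)

/-- Statement `B(η, ε, L)` from the paper. -/
def StB (η ε L : ℝ) : Prop :=
  ∀ (n : ℕ) (p q : Fvec n → ℝ), IsDist p → IsDist q →
    ∃ V : Submodule (ZMod 2) (Fvec n),
      ent (unifOn (V : Set (Fvec n))) ≤ L * (ent p + ent q) ∧
      ent (conv (push V.mkQ p) (push V.mkQ q)) ≥
        (1 - η) * (ent (push V.mkQ p) + ent (push V.mkQ q)) - ε * (ent p + ent q)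

/-!
The doubling mass `s[X; Y] = H(X) + H(Y) - H(X + Y)` drops under a linear map `f` by at most
`H(X) - H(f X)`. Hence it suffices to find, for `X` and `Y` uniform on `A`, a subspace of log-size
`O(H(X))` whose quotient map leaves a doubling mass of at most `ε (H(X) + H(Y))`: one has
`H(X + Y) ≤ log |A + A|`, and the average of `log |A ∩ (V + a)|` is the drop of `H(X)` modulo `V`.

Such a subspace is obtained by iterating the statement `A(η)`: if `s[X; Y] ≥ η (H(X) + H(Y))`, then
some subspace of log-size `O(H(X) + H(Y))` has a quotient map lowering `H(X) + H(Y)` by a constant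
factor. For `η` just below `1/2` this follows by the method of Gowers, Green, Manners and Tao: a
minimizer of a functional measuring the distance to `X` and `Y` is a pair at Ruzsa distance zero,
that is, a pair of uniform distributions on cosets of one subspace.

Now suppose `A(ρ)` holds but `A(ρ - ε)` fails. Then there are `X` and `Y` that have doubling mass
close to `ρ (H(X) + H(Y))` and whose sums cannot be compressed by any small subspace. By `A(ρ)`, no
pair derived from them exceeds the ratio `ρ` by much. For independent copies, submodularity forces
the fibers of `X₁ + Y₁` over the values of `(X₁ + X₂, Y₁ + Y₂)` to have self-doubling mass close to
their full entropy on average; the base case then compresses typical fibers by a constant factor,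
and by `A(ρ)` their doubling mass against one another is too large to allow that. So `ρ` can be
lowered by an amount bounded below as long as `ρ` stays away from zero, and `A(η)` holds for
all `η > 0`.
-/

section Expectation

variable {α β γ G : Type*}

/-- The expectation `𝔼 F(X)` of a real function of `X ∼ p`. Laws are identified below by comparing
the expectations of all test functions, see `eq_of_expect_eq`. -/
def expect (p F : α → ℝ) : ℝ := ∑ᶠ a, p a * F a

/-- The joint law of `(X, B)` where `B ∼ w` and `X ∼ k b` given `B = b`. -/
def mix (w : β → ℝ) (k : β → α → ℝ) : α × β → ℝ := fun z => w z.2 * k z.2 z.1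

theorem expect_eq_sum [Fintype α] (p F : α → ℝ) : expect p F = ∑ a, p a * F a :=
  finsum_eq_sum_of_fintype _

theorem ent_eq_sum [Fintype α] (p : α → ℝ) : ent p = ∑ a, negMulLog (p a) :=
  finsum_eq_sum_of_fintype _

theorem push_eq_sum [Fintype α] [DecidableEq β] (f : α → β) (p : α → ℝ) (b : β) :
    push f p b = ∑ a with f a = b, p a := by
  rw [push, finsum_mem_eq_finite_toFinset_sum _ (Set.toFinite _)]
  congr 1
  ext
  simp

theorem prodDist_eq_mix (p : α → ℝ) (q : β → ℝ) : prodDist p q = mix q fun _ => p :=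
  funext fun _ => mul_comm _ _

theorem isDist_iff_expect_one {p : α → ℝ} :
    IsDist p ↔ (∀ a, 0 ≤ p a) ∧ expect p (fun _ => 1) = 1 := by
  simp [IsDist, expect]

theorem IsDist.exists_pos {p : α → ℝ} (hp : IsDist p) : ∃ a, 0 < p a := by
  by_contra! h
  have p_eq_zero : p = 0 := funext fun a => le_antisymm (h a) (hp.1 a)
  simpa [p_eq_zero] using hp.2

section Finite

variable [Finite α] [Finite β] [Finite γ]

theorem eq_of_expect_eq {p q : α → ℝ} (h : ∀ F, expect p F = expect q F) : p = q := by
  classical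
  cases nonempty_fintype α
  funext a
  simpa [expect_eq_sum, Pi.single_apply] using h (Pi.single a 1)

theorem expect_add (p F G : α → ℝ) :
    expect p (fun a => F a + G a) = expect p F + expect p G := by
  cases nonempty_fintype α
  simp only [expect_eq_sum, mul_add, Finset.sum_add_distrib]

theorem expect_sub (p F G : α → ℝ) :
    expect p (fun a => F a - G a) = expect p F - expect p G := by
  cases nonempty_fintype α
  simp only [expect_eq_sum, mul_sub, Finset.sum_sub_distrib]

theorem expect_const_mul (p F : α → ℝ) (c : ℝ) :
    expect p (fun a => c * F a) = c * expect p F := by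
  cases nonempty_fintype α
  simp only [expect_eq_sum, Finset.mul_sum, mul_left_comm c]

theorem expect_comm (p : α → ℝ) (q : β → ℝ) (F : α → β → ℝ) :
    expect p (fun a => expect q (F a)) = expect q fun b => expect p fun a => F a b := by
  cases nonempty_fintype α
  cases nonempty_fintype β
  simp only [expect_eq_sum, Finset.mul_sum]
  rw [Finset.sum_comm]
  simp only [mul_left_comm]

theorem expect_push (f : α → β) (p : α → ℝ) (F : β → ℝ) :
    expect (push f p) F = expect p (F ∘ f) := by
  classical
  cases nonempty_fintype α
  cases nonempty_fintype β
  simp only [expect_eq_sum, push_eq_sum, Finset.sum_mul, Function.comp_apply]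
  rw [← Finset.sum_fiberwise Finset.univ f]
  refine Finset.sum_congr rfl fun b _ => Finset.sum_congr rfl fun a ha => ?_
  rw [(Finset.mem_filter.1 ha).2]

theorem expect_mix (w : β → ℝ) (k : β → α → ℝ) (F : α × β → ℝ) :
    expect (mix w k) F = expect w fun b => expect (k b) fun a => F (a, b) := by
  cases nonempty_fintype α
  cases nonempty_fintype β
  simp only [expect_eq_sum, mix, Fintype.sum_prod_type_right, Finset.mul_sum, mul_assoc]

theorem expect_prodDist (p : α → ℝ) (q : β → ℝ) (F : α × β → ℝ) :
    expect (prodDist p q) F = expect p fun a => expect q fun b => F (a, b) := by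
  rw [prodDist_eq_mix, expect_mix, expect_comm]

theorem expect_conv [AddCommGroup G] [Finite G] (p q F : G → ℝ) :
    expect (conv p q) F = expect p fun x => expect q fun y => F (x + y) := by
  cases nonempty_fintype G
  simp only [expect_eq_sum, conv, finsum_eq_sum_of_fintype, Finset.sum_mul, Finset.mul_sum]
  rw [Finset.sum_comm]
  refine Finset.sum_congr rfl fun x _ => ?_
  rw [← Equiv.sum_comp (Equiv.addLeft x)]
  simp only [Equiv.coe_addLeft, add_sub_cancel_left, mul_assoc]

theorem IsDist.expect_const {p : α → ℝ} (hp : IsDist p) (c : ℝ) : expect p (fun _ => c) = c := by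
  simpa [(isDist_iff_expect_one.1 hp).2] using expect_const_mul p (fun _ => 1) c

theorem IsDist.le_one {p : α → ℝ} (hp : IsDist p) (a : α) : p a ≤ 1 := by
  rw [← hp.2]
  exact single_le_finsum a (Set.toFinite _) hp.1

theorem expect_mono {p F G : α → ℝ} (hp : IsDist p) (h : ∀ a, 0 < p a → F a ≤ G a) :
    expect p F ≤ expect p G := by
  cases nonempty_fintype α
  simp only [expect_eq_sum]
  refine Finset.sum_le_sum fun a _ => ?_
  rcases (hp.1 a).eq_or_lt with h0 | h0
  · simp [← h0]
  · exact mul_le_mul_of_nonneg_left (h a h0) h0.le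

theorem expect_congr {p F G : α → ℝ} (hp : IsDist p) (h : ∀ a, 0 < p a → F a = G a) :
    expect p F = expect p G :=
  le_antisymm (expect_mono hp fun a ha => (h a ha).le) (expect_mono hp fun a ha => (h a ha).ge)

protected theorem IsDist.push {p : α → ℝ} (hp : IsDist p) (f : α → β) : IsDist (push f p) :=
  isDist_iff_expect_one.2 ⟨fun _ => finsum_nonneg fun a => finsum_nonneg fun _ => hp.1 a, by
    rw [expect_push]
    exact hp.expect_const 1⟩

protected theorem IsDist.mix {w : β → ℝ} {k : β → α → ℝ} (hw : IsDist w)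
    (hk : ∀ b, 0 < w b → IsDist (k b)) : IsDist (mix w k) := by
  refine isDist_iff_expect_one.2 ⟨fun z => ?_, ?_⟩
  · rcases (hw.1 z.2).eq_or_lt with h0 | h0
    · simp [mix, ← h0]
    · exact mul_nonneg h0.le ((hk _ h0).1 _)
  · rw [expect_mix, expect_congr hw fun b hb => (hk b hb).expect_const 1, hw.expect_const]

protected theorem IsDist.prodDist {p : α → ℝ} {q : β → ℝ} (hp : IsDist p) (hq : IsDist q) :
    IsDist (prodDist p q) :=
  prodDist_eq_mix p q ▸ hq.mix fun _ _ => hp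

protected theorem IsDist.conv [AddCommGroup G] [Finite G] {p q : G → ℝ} (hp : IsDist p)
    (hq : IsDist q) : IsDist (conv p q) :=
  isDist_iff_expect_one.2 ⟨fun _ => finsum_nonneg fun _ => mul_nonneg (hp.1 _) (hq.1 _), by
    simp only [expect_conv, hq.expect_const, hp.expect_const]⟩

theorem exists_le_of_le_expect {p F : α → ℝ} {c : ℝ} (hp : IsDist p) (h : c ≤ expect p F) :
    ∃ a, 0 < p a ∧ c ≤ F a := by
  by_contra! hlt
  cases nonempty_fintype α
  obtain ⟨a, ha⟩ := hp.exists_pos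
  have expect_lt : expect p F < expect p fun _ => c := by
    simp only [expect_eq_sum]
    refine Finset.sum_lt_sum (fun b _ => ?_)
      ⟨a, Finset.mem_univ a, mul_lt_mul_of_pos_left (hlt a ha) ha⟩
    rcases (hp.1 b).eq_or_lt with h0 | h0
    · simp [← h0]
    · exact mul_le_mul_of_nonneg_left (hlt b h0).le h0.le
  rw [hp.expect_const] at expect_lt
  exact h.not_gt expect_lt

theorem push_push (g : β → γ) (f : α → β) (p : α → ℝ) : push g (push f p) = push (g ∘ f) p :=
  eq_of_expect_eq fun F => by simp only [expect_push, Function.comp_assoc]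

theorem push_id (p : α → ℝ) : push id p = p :=
  eq_of_expect_eq fun F => by simp only [expect_push, Function.comp_id]

theorem push_snd_mix {w : β → ℝ} {k : β → α → ℝ} (hw : IsDist w)
    (hk : ∀ b, 0 < w b → IsDist (k b)) : push Prod.snd (mix w k) = w :=
  eq_of_expect_eq fun F => by
    rw [expect_push, expect_mix]
    exact expect_congr hw fun b hb => (hk b hb).expect_const (F b)

end Finite

end Expectation

section Entropy

variable {Ω α β γ : Type*}

theorem ent_eq_expect (p : α → ℝ) : ent p = expect p fun a => -log (p a) := by
  simp only [ent, expect, negMulLog, neg_mul, mul_neg]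

theorem condEnt_eq_expect (r : α × β → ℝ) :
    condEnt r = expect (push Prod.snd r) fun b => ent (fiber r b) :=
  rfl

theorem push_snd_eq_sum [Fintype α] [Finite β] (r : α × β → ℝ) (b : β) :
    push Prod.snd r b = ∑ a, r (a, b) := by
  classical
  cases nonempty_fintype β
  simp [push_eq_sum, Finset.sum_filter, Fintype.sum_prod_type]

theorem push_fst_eq_sum [Finite α] [Fintype β] (r : α × β → ℝ) (a : α) :
    push Prod.fst r a = ∑ b, r (a, b) := by
  classical
  cases nonempty_fintype α
  simp [push_eq_sum, Finset.sum_filter, Fintype.sum_prod_type_right]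

theorem IsDist.le_push [Finite α] {p : α → ℝ} (hp : IsDist p) (f : α → β) (a : α) :
    p a ≤ push f p (f a) := by
  rw [push, finsum_mem_eq_finite_toFinset_sum _ (Set.toFinite _)]
  exact Finset.single_le_sum (fun b _ => hp.1 b) (by simp)

variable [Finite Ω] [Finite α] [Finite β] [Finite γ]

theorem ent_nonneg {p : α → ℝ} (hp : IsDist p) : 0 ≤ ent p :=
  finsum_nonneg fun a => negMulLog_nonneg (hp.1 a) (hp.le_one a)

theorem ent_push_le {p : α → ℝ} (hp : IsDist p) (f : α → β) : ent (push f p) ≤ ent p := by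
  rw [ent_eq_expect, ent_eq_expect, expect_push]
  exact expect_mono hp fun a ha => neg_le_neg (log_le_log ha (hp.le_push f a))

theorem ent_push_le_of_factor {p : Ω → ℝ} (hp : IsDist p) {X : Ω → α} {Y : Ω → β} (f : β → α)
    (h : ∀ ω, X ω = f (Y ω)) : ent (push X p) ≤ ent (push Y p) := by
  obtain rfl : X = f ∘ Y := funext h
  rw [← push_push]
  exact ent_push_le (hp.push Y) f

theorem ent_push_eq_of_factor {p : Ω → ℝ} (hp : IsDist p) {X : Ω → α} {Y : Ω → β} (f : β → α)
    (g : α → β) (hf : ∀ ω, X ω = f (Y ω)) (hg : ∀ ω, Y ω = g (X ω)) :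
    ent (push X p) = ent (push Y p) :=
  le_antisymm (ent_push_le_of_factor hp f hf) (ent_push_le_of_factor hp g hg)

theorem ent_push_of_leftInverse {p : α → ℝ} (hp : IsDist p) {f : α → β} {g : β → α}
    (h : Function.LeftInverse g f) : ent (push f p) = ent p := by
  conv_rhs => rw [← push_id p]
  exact ent_push_eq_of_factor hp f g (fun _ => rfl) fun a => (h a).symm

theorem ent_mix {w : β → ℝ} {k : β → α → ℝ} (hw : IsDist w) (hk : ∀ b, 0 < w b → IsDist (k b)) :
    ent (mix w k) = ent w + expect w fun b => ent (k b) := by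
  cases nonempty_fintype α
  cases nonempty_fintype β
  simp only [ent_eq_sum, expect_eq_sum, mix, Fintype.sum_prod_type_right, negMulLog_mul,
    Finset.sum_add_distrib, ← Finset.sum_mul, ← Finset.mul_sum]
  congr 1
  refine Finset.sum_congr rfl fun b _ => ?_
  rcases (hw.1 b).eq_or_lt with h0 | h0
  · simp [← h0]
  · rw [← finsum_eq_sum_of_fintype, (hk b h0).2, one_mul]

protected theorem IsDist.fiber {r : α × β → ℝ} (hr : IsDist r) {b : β}
    (hb : 0 < push Prod.snd r b) : IsDist (fiber r b) := by
  refine ⟨fun a => div_nonneg (hr.1 _) hb.le, ?_⟩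
  cases nonempty_fintype α
  simp only [fiber]
  rw [finsum_eq_sum_of_fintype, ← Finset.sum_div, ← push_snd_eq_sum, div_self hb.ne']

theorem mix_fiber {r : α × β → ℝ} (hr : IsDist r) : mix (push Prod.snd r) (fiber r) = r := by
  funext z
  by_cases hz : push Prod.snd r z.2 = 0
  · have hr0 := hr.le_push Prod.snd z
    rw [hz] at hr0
    simp [mix, hz, le_antisymm hr0 (hr.1 z)]
  · exact mul_div_cancel₀ _ hz

theorem fiber_mix {w : β → ℝ} {k : β → α → ℝ} (hw : IsDist w)
    (hk : ∀ b, 0 < w b → IsDist (k b)) {b : β} (hb : 0 < w b) : fiber (mix w k) b = k b := by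
  funext a
  rw [fiber, push_snd_mix hw hk]
  exact mul_div_cancel_left₀ _ hb.ne'

theorem condEnt_eq {r : α × β → ℝ} (hr : IsDist r) :
    condEnt r = ent r - ent (push Prod.snd r) := by
  have chain_rule := ent_mix (hr.push Prod.snd) fun b => hr.fiber (b := b)
  rw [mix_fiber hr] at chain_rule
  rw [condEnt_eq_expect, chain_rule, add_sub_cancel_left]

theorem ent_prodDist {p : α → ℝ} {q : β → ℝ} (hp : IsDist p) (hq : IsDist q) :
    ent (prodDist p q) = ent p + ent q := by
  rw [prodDist_eq_mix, ent_mix hq fun _ _ => hp, hq.expect_const, add_comm]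

theorem condEnt_nonneg {r : α × β → ℝ} (hr : IsDist r) : 0 ≤ condEnt r := by
  rw [condEnt_eq hr]
  exact sub_nonneg.2 (ent_push_le hr _)

theorem condEnt_le {r : α × β → ℝ} (hr : IsDist r) : condEnt r ≤ ent (push Prod.fst r) := by
  cases nonempty_fintype α
  cases nonempty_fintype β
  have push_fst (a : α) : push Prod.fst r a = ∑ b, push Prod.snd r b * fiber r b a := by
    rw [push_fst_eq_sum]
    exact Finset.sum_congr rfl fun b _ => (congrFun (mix_fiber hr) (a, b)).symm
  simp only [condEnt_eq_expect, expect_eq_sum, ent_eq_sum, Finset.mul_sum, push_fst]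
  rw [Finset.sum_comm]
  refine Finset.sum_le_sum fun a _ => ?_
  refine concaveOn_negMulLog.le_map_sum (fun b _ => (hr.push Prod.snd).1 b) ?_ fun b _ =>
    div_nonneg (hr.1 _) ((hr.push Prod.snd).1 b)
  rw [← finsum_eq_sum_of_fintype, (hr.push Prod.snd).2]

theorem push_map_mix (f : α → γ) (w : β → ℝ) (k : β → α → ℝ) :
    push (Prod.map f id) (mix w k) = mix w fun b => push f (k b) :=
  eq_of_expect_eq fun F => by simp [expect_push, expect_mix, Function.comp_def]

theorem fiber_push_map (f : α → γ) {r : α × β → ℝ} (hr : IsDist r) {b : β}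
    (hb : 0 < push Prod.snd r b) : fiber (push (Prod.map f id) r) b = push f (fiber r b) := by
  conv_lhs => rw [← mix_fiber hr, push_map_mix]
  exact fiber_mix (hr.push _) (fun b hb => (hr.fiber hb).push f) hb

theorem push_snd_push_map (f : α → γ) (r : α × β → ℝ) :
    push Prod.snd (push (Prod.map f id) r) = push Prod.snd r :=
  push_push _ _ r

theorem ent_le_ent_fst_add_ent_snd {r : α × β → ℝ} (hr : IsDist r) :
    ent r ≤ ent (push Prod.fst r) + ent (push Prod.snd r) := by
  rw [← sub_le_iff_le_add, ← condEnt_eq hr]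
  exact condEnt_le hr

theorem condEnt_push_map {r : α × β → ℝ} (hr : IsDist r) (f : α → γ) :
    condEnt (push (Prod.map f id) r) =
      expect (push Prod.snd r) fun b => ent (push f (fiber r b)) := by
  rw [condEnt_eq_expect, push_snd_push_map]
  exact expect_congr (hr.push _) fun b hb => by rw [fiber_push_map f hr hb]

/-- Submodularity of entropy: average the subadditivity of entropy over the values of `Z`. -/
theorem ent_submodular {p : Ω → ℝ} (hp : IsDist p) (X : Ω → α) (Y : Ω → β) (Z : Ω → γ) :
    ent (push (fun ω => (X ω, Y ω, Z ω)) p) + ent (push Z p) ≤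
      ent (push (fun ω => (X ω, Z ω)) p) + ent (push (fun ω => (Y ω, Z ω)) p) := by
  set r : (α × β) × γ → ℝ := push (fun ω => ((X ω, Y ω), Z ω)) p
  have hr : IsDist r := hp.push _
  have subadditive : condEnt r ≤
      condEnt (push (Prod.map Prod.fst id) r) + condEnt (push (Prod.map Prod.snd id) r) := by
    rw [condEnt_push_map hr, condEnt_push_map hr, ← expect_add]
    exact expect_mono (hr.push _) fun c hc => ent_le_ent_fst_add_ent_snd (hr.fiber hc)
  have assoc : ent r = ent (push (fun ω => (X ω, Y ω, Z ω)) p) :=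
    ent_push_eq_of_factor hp (fun z => ((z.1, z.2.1), z.2.2)) (fun z => (z.1.1, z.1.2, z.2))
      (fun _ => rfl) fun _ => rfl
  rw [condEnt_eq hr, condEnt_eq (hr.push _), condEnt_eq (hr.push _)] at subadditive
  simp only [push_snd_push_map, assoc] at subadditive
  simp only [r, push_push] at subadditive
  change _ - ent (push Z p) ≤ ent (push (fun ω => (X ω, Z ω)) p) - ent (push Z p) +
    (ent (push (fun ω => (Y ω, Z ω)) p) - ent (push Z p)) at subadditive
  linarith

theorem condEnt_le_condEnt_push_map_id {r : α × β → ℝ} (hr : IsDist r) (g : β → γ) :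
    condEnt r ≤ condEnt (push (Prod.map id g) r) := by
  have submod := ent_submodular hr Prod.fst Prod.snd (g ∘ Prod.snd)
  have joint : ent (push (fun z : α × β => (z.1, z.2, (g ∘ Prod.snd) z)) r) = ent r :=
    ent_push_of_leftInverse hr (g := fun z => (z.1, z.2.1)) fun _ => rfl
  have snd : ent (push (fun z : α × β => (z.2, (g ∘ Prod.snd) z)) r) = ent (push Prod.snd r) :=
    ent_push_eq_of_factor hr (fun b => (b, g b)) Prod.fst (fun _ => rfl) fun _ => rfl
  rw [condEnt_eq hr, condEnt_eq (hr.push _), push_push]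
  rw [joint, snd] at submod
  change ent r - _ ≤ ent (push (fun z => (z.1, (g ∘ Prod.snd) z)) r) - ent (push (g ∘ Prod.snd) r)
  linarith

theorem condEnt_sub_condEnt_push_map_le {r : α × β → ℝ} (hr : IsDist r) (f : α → γ) :
    condEnt r - condEnt (push (Prod.map f id) r) ≤
      ent (push Prod.fst r) - ent (push f (push Prod.fst r)) := by
  have submod := ent_submodular hr Prod.fst Prod.snd (f ∘ Prod.fst)
  have joint : ent (push (fun z : α × β => (z.1, z.2, (f ∘ Prod.fst) z)) r) = ent r :=
    ent_push_of_leftInverse hr (g := fun z => (z.1, z.2.1)) fun _ => rfl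
  have fst : ent (push (fun z : α × β => (z.1, (f ∘ Prod.fst) z)) r) = ent (push Prod.fst r) :=
    ent_push_eq_of_factor hr (fun a => (a, f a)) Prod.fst (fun _ => rfl) fun _ => rfl
  have swap : ent (push (fun z : α × β => (z.2, (f ∘ Prod.fst) z)) r) =
      ent (push (Prod.map f id) r) :=
    ent_push_eq_of_factor hr Prod.swap Prod.swap (fun _ => rfl) fun _ => rfl
  rw [condEnt_eq hr, condEnt_eq (hr.push _), push_snd_push_map, push_push]
  rw [joint, fst, swap] at submod
  linarith

end Entropy

section Sums

variable {α β γ δ G G' : Type*} [Finite α] [Finite β] [Finite γ] [Finite δ]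
variable [AddCommGroup G] [Finite G] [AddCommGroup G'] [Finite G']

theorem push_map_prodDist (f : α → γ) (g : β → δ) (p : α → ℝ) (q : β → ℝ) :
    push (Prod.map f g) (prodDist p q) = prodDist (push f p) (push g q) :=
  eq_of_expect_eq fun F => by simp [expect_push, expect_prodDist, Function.comp_def]

theorem conv_eq_push (p q : G → ℝ) : conv p q = push (fun z => z.1 + z.2) (prodDist p q) :=
  eq_of_expect_eq fun F => by simp [expect_push, expect_prodDist, expect_conv]

theorem conv_comm (p q : G → ℝ) : conv p q = conv q p :=
  eq_of_expect_eq fun F => by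
    rw [expect_conv, expect_conv, expect_comm]
    simp only [add_comm]

theorem conv_assoc (p q r : G → ℝ) : conv (conv p q) r = conv p (conv q r) :=
  eq_of_expect_eq fun F => by simp only [expect_conv, add_assoc]

theorem conv_conv_conv_comm (p q r s : G → ℝ) :
    conv (conv p q) (conv r s) = conv (conv p r) (conv q s) := by
  rw [conv_assoc, ← conv_assoc q, conv_comm q, conv_assoc r, ← conv_assoc]

theorem push_conv {F : Type*} [FunLike F G G'] [AddMonoidHomClass F G G'] (f : F) (p q : G → ℝ) :
    push f (conv p q) = conv (push f p) (push f q) :=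
  eq_of_expect_eq fun F => by simp [expect_push, expect_conv, Function.comp_def]

theorem expect_jointSum (p q : G → ℝ) (F : G × G → ℝ) :
    expect (jointSum p q) F = expect p fun x => expect q fun y => F (x, x + y) := by
  simp [jointSum, expect_push, expect_prodDist]

theorem push_snd_jointSum (p q : G → ℝ) : push Prod.snd (jointSum p q) = conv p q :=
  eq_of_expect_eq fun F => by simp [expect_push, expect_conv, expect_jointSum]

section Dist

variable {p q r : G → ℝ} (hp : IsDist p) (hq : IsDist q)
include hp hq

protected theorem IsDist.jointSum : IsDist (jointSum p q) :=
  (hp.prodDist hq).push _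

theorem ent_jointSum : ent (jointSum p q) = ent p + ent q := by
  rw [← ent_prodDist hp hq]
  exact ent_push_of_leftInverse (hp.prodDist hq) (g := fun z => (z.1, z.2 - z.1)) fun z => by simp

theorem condEnt_jointSum : condEnt (jointSum p q) = sDouble p q := by
  rw [condEnt_eq (hp.jointSum hq), ent_jointSum hp hq, push_snd_jointSum, sDouble]

omit hp in
theorem push_fst_jointSum : push Prod.fst (jointSum p q) = p :=
  eq_of_expect_eq fun F => by simp [expect_push, expect_jointSum, hq.expect_const]

theorem sDouble_nonneg : 0 ≤ sDouble p q :=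
  condEnt_jointSum hp hq ▸ condEnt_nonneg (hp.jointSum hq)

theorem sDouble_le_left : sDouble p q ≤ ent p := by
  rw [← condEnt_jointSum hp hq]
  conv_rhs => rw [← push_fst_jointSum (p := p) hq]
  exact condEnt_le (hp.jointSum hq)

omit hp hq in
theorem sDouble_comm (p q : G → ℝ) : sDouble p q = sDouble q p := by
  rw [sDouble, sDouble, conv_comm, add_comm (ent p)]

theorem sDouble_le_right : sDouble p q ≤ ent q :=
  sDouble_comm q p ▸ sDouble_le_left hq hp

theorem ent_conv_le : ent (conv p q) ≤ ent p + ent q :=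
  sub_nonneg.1 (sDouble_nonneg hp hq)

theorem ent_le_ent_conv_left : ent p ≤ ent (conv p q) := by
  have := sDouble_le_right hp hq
  rw [sDouble] at this
  linarith

theorem ent_le_ent_conv_right : ent q ≤ ent (conv p q) :=
  conv_comm q p ▸ ent_le_ent_conv_left hq hp

/-- The Kaimanovich–Vershik inequality: submodularity for `X`, `Z` and `X + Y + Z`. -/
theorem ent_conv_conv_add_ent_le (hr : IsDist r) :
    ent (conv (conv p q) r) + ent q ≤ ent (conv p q) + ent (conv q r) := by
  have hpqr := hp.prodDist (hq.prodDist hr)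
  set S : G × G × G → G := fun z => z.1 + (z.2.1 + z.2.2)
  have submod := ent_submodular hpqr (fun z => z.1) (fun z => z.2.2) S
  have sum_law : push S (prodDist p (prodDist q r)) = conv p (conv q r) :=
    eq_of_expect_eq fun F => by simp [expect_push, expect_prodDist, expect_conv, S]
  have all : ent (push (fun z => (z.1, z.2.2, S z)) (prodDist p (prodDist q r))) =
      ent p + (ent q + ent r) := by
    rw [← ent_prodDist hq hr, ← ent_prodDist hp (hq.prodDist hr)]
    exact ent_push_of_leftInverse hpqr (g := fun z => (z.1, z.2.2 - z.1 - z.2.1, z.2.1))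
      fun z => by simp [S]
  have left : push (fun z => (z.1, S z)) (prodDist p (prodDist q r)) = jointSum p (conv q r) :=
    eq_of_expect_eq fun F => by
      simp [expect_push, expect_prodDist, expect_conv, expect_jointSum, S]
  have right : push (fun z => (z.2.2, S z)) (prodDist p (prodDist q r)) =
      jointSum r (conv p q) :=
    eq_of_expect_eq fun F => by
      rw [expect_push, expect_jointSum, expect_comm]
      simp [expect_prodDist, expect_conv, S, add_comm, add_left_comm]
  rw [sum_law, all, left, right, ent_jointSum hp (hq.conv hr), ent_jointSum hr (hp.conv hq)]
    at submod
  rw [conv_assoc]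
  linarith

/-- Apply `condEnt_sub_condEnt_push_map_le` to `X + Y` given `X`. -/
theorem ent_sub_ent_push_le_conv {F : Type*} [FunLike F G G'] [AddMonoidHomClass F G G'] (f : F) :
    ent q - ent (push f q) ≤ ent (conv p q) - ent (push f (conv p q)) := by
  have hpq := hp.prodDist hq
  set r : G × G → ℝ := push (fun z => (z.1 + z.2, z.1)) (prodDist p q)
  have hr : IsDist r := hpq.push _
  have fst : push Prod.fst r = conv p q := by rw [conv_eq_push, push_push]; rfl
  have snd : push Prod.snd r = p :=
    eq_of_expect_eq fun F => by simp [r, expect_push, expect_prodDist, hq.expect_const]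
  have joint : ent r = ent p + ent q := by
    rw [← ent_prodDist hp hq]
    exact ent_push_of_leftInverse hpq (g := fun z => (z.2, z.1 - z.2)) fun z => by simp
  have joint_image : ent (push (Prod.map f id) r) = ent p + ent (push f q) := by
    have image_law : prodDist p (push f q) = push (Prod.map id f) (prodDist p q) := by
      rw [push_map_prodDist, push_id]
    rw [push_push, ← ent_prodDist hp (hq.push f), image_law]
    exact ent_push_eq_of_factor hpq (fun z => (f z.1 + z.2, z.1)) (fun z => (z.2, z.1 - f z.2))
      (by simp) (by simp)
  have drop := condEnt_sub_condEnt_push_map_le hr f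
  rw [condEnt_eq hr, condEnt_eq (hr.push _), push_snd_push_map, snd, joint, joint_image, fst]
    at drop
  linarith

theorem sDouble_sub_sDouble_push_le_left {F : Type*} [FunLike F G G'] [AddMonoidHomClass F G G']
    (f : F) : sDouble p q - sDouble (push f p) (push f q) ≤ ent p - ent (push f p) := by
  have := ent_sub_ent_push_le_conv hp hq f
  rw [push_conv] at this
  simp only [sDouble]
  linarith

theorem sDouble_sub_sDouble_push_le_right {F : Type*} [FunLike F G G'] [AddMonoidHomClass F G G']
    (f : F) : sDouble p q - sDouble (push f p) (push f q) ≤ ent q - ent (push f q) := by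
  rw [sDouble_comm p, sDouble_comm (push f p)]
  exact sDouble_sub_sDouble_push_le_left hq hp f

end Dist

end Sums

section Families

variable {α β γ G : Type*} [Finite α] [Finite β] [Finite γ] [AddCommGroup G] [Finite G]

/-- The joint law of `(X + Y, (U, W))`, where the pairs `(X, U) ∼ r₁` and `(Y, W) ∼ r₂` are
independent. -/
def sumJoint (r₁ : G × β → ℝ) (r₂ : G × γ → ℝ) : G × (β × γ) → ℝ :=
  push (fun z => (z.1.1 + z.2.1, (z.1.2, z.2.2))) (prodDist r₁ r₂)

protected theorem IsDist.sumJoint {r₁ : G × β → ℝ} {r₂ : G × γ → ℝ} (h₁ : IsDist r₁)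
    (h₂ : IsDist r₂) : IsDist (sumJoint r₁ r₂) :=
  (h₁.prodDist h₂).push _

theorem expect_sumJoint (r₁ : G × β → ℝ) (r₂ : G × γ → ℝ) (F : G × (β × γ) → ℝ) :
    expect (sumJoint r₁ r₂) F =
      expect r₁ fun z₁ => expect r₂ fun z₂ => F (z₁.1 + z₂.1, (z₁.2, z₂.2)) := by
  simp [sumJoint, expect_push, expect_prodDist]

theorem push_fst_sumJoint (r₁ : G × β → ℝ) (r₂ : G × γ → ℝ) :
    push Prod.fst (sumJoint r₁ r₂) = conv (push Prod.fst r₁) (push Prod.fst r₂) :=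
  eq_of_expect_eq fun F => by
    simp [expect_push, expect_sumJoint, expect_conv, Function.comp_def]

theorem push_snd_sumJoint (r₁ : G × β → ℝ) (r₂ : G × γ → ℝ) :
    push Prod.snd (sumJoint r₁ r₂) = prodDist (push Prod.snd r₁) (push Prod.snd r₂) :=
  eq_of_expect_eq fun F => by
    simp [expect_push, expect_sumJoint, expect_prodDist, Function.comp_def]

theorem push_map_id_sumJoint {β' γ' : Type*} [Finite β'] [Finite γ'] (f : β → β') (g : γ → γ')
    (r₁ : G × β → ℝ) (r₂ : G × γ → ℝ) :
    push (Prod.map id (Prod.map f g)) (sumJoint r₁ r₂) =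
      sumJoint (push (Prod.map id f) r₁) (push (Prod.map id g) r₂) :=
  eq_of_expect_eq fun F => by
    simp [expect_push, expect_sumJoint, Function.comp_def]

theorem expect_eq_expect_fiber {r : α × β → ℝ} (hr : IsDist r) (F : α × β → ℝ) :
    expect r F = expect (push Prod.snd r) fun b => expect (fiber r b) fun a => F (a, b) := by
  conv_lhs => rw [← mix_fiber hr, expect_mix]

theorem sumJoint_eq_mix {r₁ : G × β → ℝ} {r₂ : G × γ → ℝ} (h₁ : IsDist r₁) (h₂ : IsDist r₂) :
    sumJoint r₁ r₂ = mix (prodDist (push Prod.snd r₁) (push Prod.snd r₂))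
      fun z => conv (fiber r₁ z.1) (fiber r₂ z.2) :=
  eq_of_expect_eq fun F => by
    simp only [expect_sumJoint, expect_mix, expect_prodDist, expect_conv,
      expect_eq_expect_fiber h₁, expect_eq_expect_fiber h₂]
    congr! 2 with u
    rw [expect_comm]

theorem condEnt_mix {w : β → ℝ} {k : β → α → ℝ} (hw : IsDist w)
    (hk : ∀ b, 0 < w b → IsDist (k b)) : condEnt (mix w k) = expect w fun b => ent (k b) := by
  rw [condEnt_eq (hw.mix hk), ent_mix hw hk, push_snd_mix hw hk, add_sub_cancel_left]

theorem condEnt_sumJoint {r₁ : G × β → ℝ} {r₂ : G × γ → ℝ} (h₁ : IsDist r₁) (h₂ : IsDist r₂) :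
    condEnt (sumJoint r₁ r₂) = expect (push Prod.snd r₁) fun u =>
      expect (push Prod.snd r₂) fun w => ent (conv (fiber r₁ u) (fiber r₂ w)) := by
  have hw₁ := h₁.push Prod.snd
  have hw₂ := h₂.push Prod.snd
  rw [sumJoint_eq_mix h₁ h₂, condEnt_mix (hw₁.prodDist hw₂), expect_prodDist]
  exact fun z hz => (h₁.fiber (pos_of_mul_pos_left hz (hw₂.1 _))).conv
    (h₂.fiber (pos_of_mul_pos_right hz (hw₁.1 _)))

theorem sCond_eq_expect {β G : Type*} [AddGroup G] (r₁ : G × β → ℝ) (r₂ : G × γ → ℝ) :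
    sCond r₁ r₂ = expect (push Prod.snd r₁) fun u =>
      expect (push Prod.snd r₂) fun w => sDouble (fiber r₁ u) (fiber r₂ w) := by
  simp only [sCond, expect, mul_finsum' _ _ (Set.toFinite _), mul_assoc]

theorem sCond_eq {r₁ : G × β → ℝ} {r₂ : G × γ → ℝ} (h₁ : IsDist r₁) (h₂ : IsDist r₂) :
    sCond r₁ r₂ = condEnt r₁ + condEnt r₂ - condEnt (sumJoint r₁ r₂) := by
  simp only [sCond_eq_expect, sDouble, expect_sub, expect_add,
    (h₂.push Prod.snd).expect_const, (h₁.push Prod.snd).expect_const, condEnt_sumJoint h₁ h₂]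
  rfl

theorem condEnt_sumJoint_le_map {β' γ' : Type*} [Finite β'] [Finite γ'] {r₁ : G × β → ℝ}
    {r₂ : G × γ → ℝ} (h₁ : IsDist r₁) (h₂ : IsDist r₂) (f : β → β') (g : γ → γ') :
    condEnt (sumJoint r₁ r₂) ≤
      condEnt (sumJoint (push (Prod.map id f) r₁) (push (Prod.map id g) r₂)) := by
  rw [← push_map_id_sumJoint]
  exact condEnt_le_condEnt_push_map_id (h₁.sumJoint h₂) _

theorem expect_ent_conv_fiber_le {r : G × β → ℝ} (hr : IsDist r) {p : G → ℝ} (hp : IsDist p) :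
    expect (push Prod.snd r) (fun b => ent (conv (fiber r b) p)) ≤
      ent (conv (push Prod.fst r) p) := by
  have hk (b : β) (hb : 0 < push Prod.snd r b) : IsDist (conv (fiber r b) p) :=
    (hr.fiber hb).conv hp
  have average : push Prod.fst (mix (push Prod.snd r) fun b => conv (fiber r b) p) =
      conv (push Prod.fst r) p :=
    eq_of_expect_eq fun F => by
      rw [expect_push, expect_mix, expect_conv, expect_push Prod.fst, expect_eq_expect_fiber hr]
      simp only [expect_conv, Function.comp_apply]
  rw [← condEnt_mix (hr.push _) hk, ← average]
  exact condEnt_le ((hr.push _).mix hk)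

/-- The joint law of `(a₁ + b₁, (a₁ + a₂, b₁ + b₂))` for independent variables with the given
laws. -/
def condSums (a₁ a₂ b₁ b₂ : G → ℝ) : G × (G × G) → ℝ :=
  sumJoint (jointSum a₁ a₂) (jointSum b₁ b₂)

theorem expect_condSums (a₁ a₂ b₁ b₂ : G → ℝ) (F : G × (G × G) → ℝ) :
    expect (condSums a₁ a₂ b₁ b₂) F = expect a₁ fun x₁ => expect a₂ fun x₂ => expect b₁ fun y₁ =>
      expect b₂ fun y₂ => F (x₁ + y₁, (x₁ + x₂, y₁ + y₂)) := by
  simp only [condSums, expect_sumJoint, expect_jointSum]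

theorem push_snd_condSums (a₁ a₂ b₁ b₂ : G → ℝ) :
    push Prod.snd (condSums a₁ a₂ b₁ b₂) = prodDist (conv a₁ a₂) (conv b₁ b₂) := by
  rw [condSums, push_snd_sumJoint, push_snd_jointSum, push_snd_jointSum]

theorem push_fst_add_condSums (a₁ a₂ b₁ b₂ : G → ℝ) :
    push (fun z => (z.1, z.2.1 + z.2.2)) (condSums a₁ a₂ b₁ b₂) =
      jointSum (conv a₁ b₁) (conv a₂ b₂) :=
  eq_of_expect_eq fun F => by
    rw [expect_push, expect_condSums, expect_jointSum]
    simp only [expect_conv, Function.comp_apply, expect_comm a₂ b₁, add_add_add_comm]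

theorem push_fst_add_snd_condSums [Module (ZMod 2) G] (a₁ a₂ b₁ b₂ : G → ℝ) :
    push (fun z => (z.1 + z.2.2, z.2.1 + z.2.2)) (condSums a₁ a₂ b₁ b₂) =
      jointSum (conv a₁ b₂) (conv a₂ b₁) :=
  eq_of_expect_eq fun F => by
    have sum (x₁ x₂ y₁ y₂ : G) : x₁ + x₂ + (y₁ + y₂) = x₁ + y₂ + (x₂ + y₁) := by abel
    rw [expect_push, expect_condSums, expect_jointSum]
    simp only [expect_conv, Function.comp_apply, expect_comm b₁ b₂, expect_comm a₂ b₂,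
      ZModModule.add_add_add_cancel, sum]

section Dist

variable {a₁ a₂ b₁ b₂ : G → ℝ} (ha₁ : IsDist a₁) (ha₂ : IsDist a₂) (hb₁ : IsDist b₁)
  (hb₂ : IsDist b₂)
include ha₂ hb₂

theorem push_fst_condSums : push Prod.fst (condSums a₁ a₂ b₁ b₂) = conv a₁ b₁ := by
  rw [condSums, push_fst_sumJoint, push_fst_jointSum ha₂, push_fst_jointSum hb₂]

include ha₁ hb₁

protected theorem IsDist.condSums : IsDist (condSums a₁ a₂ b₁ b₂) :=
  (ha₁.jointSum ha₂).sumJoint (hb₁.jointSum hb₂)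

theorem condEnt_condSums : condEnt (condSums a₁ a₂ b₁ b₂) =
    ent (condSums a₁ a₂ b₁ b₂) - (ent (conv a₁ a₂) + ent (conv b₁ b₂)) := by
  rw [condEnt_eq (ha₁.condSums ha₂ hb₁ hb₂), push_snd_condSums,
    ent_prodDist (ha₁.conv ha₂) (hb₁.conv hb₂)]

theorem condEnt_condSums_le :
    condEnt (condSums a₁ a₂ b₁ b₂) ≤ sDouble (conv a₁ b₁) (conv a₂ b₂) := by
  rw [← condEnt_jointSum (ha₁.conv hb₁) (ha₂.conv hb₂), ← push_fst_add_condSums]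
  exact condEnt_le_condEnt_push_map_id (ha₁.condSums ha₂ hb₁ hb₂) fun z => z.1 + z.2

theorem sCond_jointSum : sCond (jointSum a₁ a₂) (jointSum b₁ b₂) =
    sDouble a₁ a₂ + sDouble b₁ b₂ - condEnt (condSums a₁ a₂ b₁ b₂) := by
  rw [sCond_eq (ha₁.jointSum ha₂) (hb₁.jointSum hb₂), condEnt_jointSum ha₁ ha₂,
    condEnt_jointSum hb₁ hb₂, condSums]

theorem ent_condSums_rotate [Module (ZMod 2) G] :
    ent (condSums a₁ b₁ b₂ a₂) = ent (condSums a₁ a₂ b₁ b₂) := by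
  set f : G × (G × G) → G × (G × G) := fun z => (z.1 + z.2.2, (z.1, z.1 + z.2.1 + z.2.2))
  have rotate : condSums a₁ b₁ b₂ a₂ = push f (condSums a₁ a₂ b₁ b₂) :=
    eq_of_expect_eq fun F => by
      have cancel (x y z w : G) : x + y + (x + z) + (y + w) = w + z := by
        rw [add_comm x y, ZModModule.add_add_add_cancel, add_comm y z,
          ZModModule.add_add_add_cancel, add_comm]
      simp only [expect_push, expect_condSums, Function.comp_apply, expect_comm a₂, f,
        ZModModule.add_add_add_cancel, cancel]
  have inverse : Function.LeftInverse (fun z => (z.2.1, (z.1 + z.2.2, z.1 + z.2.1))) f := by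
    rintro ⟨x, y, z⟩
    have first : x + z + (x + y + z) = y := by
      rw [add_right_comm x y, ← add_assoc, ZModModule.add_self, zero_add]
    have second : x + z + x = z := by rw [add_right_comm, ZModModule.add_self, zero_add]
    simp only [f, first, second]
  rw [rotate]
  exact ent_push_of_leftInverse (ha₁.condSums ha₂ hb₁ hb₂) inverse

end Dist

end Families

section Diagonal

variable {Ω α β γ G : Type*} [Finite Ω] [Finite α] [Finite β] [Finite γ] [AddCommGroup G] [Finite G]

theorem ent_pair_add_ent_add_le {p : Ω → ℝ} (hp : IsDist p) (A A' Q : Ω → G) (S : Ω → γ) :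
    ent (push (fun ω => ((A ω, A' ω), Q ω, S ω)) p) +
        ent (push (fun ω => (A ω + A' ω, Q ω, S ω)) p) + 3 * ent (push S p) ≤
      ent (push (fun ω => (A ω, S ω)) p) + ent (push (fun ω => (A' ω, S ω)) p) +
        ent (push (fun ω => (A ω + Q ω, S ω)) p) + ent (push (fun ω => (A' ω + Q ω, S ω)) p) +
        ent (push (fun ω => (Q ω, S ω)) p) := by
  have submod_total := ent_submodular hp A (fun ω => A ω + Q ω) fun ω => (A ω + A' ω + Q ω, S ω)
  have submod_left := ent_submodular hp A (fun ω => A' ω + Q ω) S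
  have submod_right := ent_submodular hp A' (fun ω => A ω + Q ω) S
  have submod_shift := ent_submodular hp (fun ω => A ω + A' ω + Q ω) Q S
  have quadruple : ent (push (fun ω => (A ω, A ω + Q ω, A ω + A' ω + Q ω, S ω)) p) =
      ent (push (fun ω => ((A ω, A' ω), Q ω, S ω)) p) :=
    ent_push_eq_of_factor hp
      (fun z => (z.1.1, z.1.1 + z.2.1, z.1.1 + z.1.2 + z.2.1, z.2.2))
      (fun z => ((z.1, z.2.2.1 - z.2.1), z.2.1 - z.1, z.2.2.2))
      (fun _ => rfl) fun ω => by simp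
  have drop_left : ent (push (fun ω => (A ω, A ω + A' ω + Q ω, S ω)) p) =
      ent (push (fun ω => (A ω, A' ω + Q ω, S ω)) p) :=
    ent_push_eq_of_factor hp (fun z => (z.1, z.1 + z.2.1, z.2.2))
      (fun z => (z.1, z.2.1 - z.1, z.2.2)) (fun ω => by simp [add_assoc])
      fun ω => by simp [add_assoc]
  have drop_right : ent (push (fun ω => (A ω + Q ω, A ω + A' ω + Q ω, S ω)) p) =
      ent (push (fun ω => (A' ω, A ω + Q ω, S ω)) p) :=
    ent_push_eq_of_factor hp (fun z => (z.2.1, z.2.1 + z.1, z.2.2))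
      (fun z => (z.2.1 - z.1, z.1, z.2.2)) (fun ω => by simp [add_right_comm])
      fun ω => by simp
  have unshift : ent (push (fun ω => (A ω + A' ω + Q ω, Q ω, S ω)) p) =
      ent (push (fun ω => (A ω + A' ω, Q ω, S ω)) p) :=
    ent_push_eq_of_factor hp (fun z => (z.1 + z.2.1, z.2)) (fun z => (z.1 - z.2.1, z.2))
      (fun _ => rfl) fun ω => by simp
  linarith

/-- The joint law of two conditionally independent copies of `X` given `U` together with `U`, where
`(X, U) ∼ r`. -/
def condCopies (r : α × β → ℝ) : (α × α) × β → ℝ :=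
  mix (push Prod.snd r) fun b => prodDist (fiber r b) (fiber r b)

section Dist

variable {r : α × β → ℝ} (hr : IsDist r)
include hr

protected theorem IsDist.condCopies : IsDist (condCopies r) :=
  (hr.push _).mix fun _ hb => (hr.fiber hb).prodDist (hr.fiber hb)

theorem ent_condCopies : ent (condCopies r) = 2 * ent r - ent (push Prod.snd r) := by
  have double : ent (condCopies r) = ent (push Prod.snd r) + expect (push Prod.snd r)
      fun b => ent (fiber r b) + ent (fiber r b) := by
    rw [condCopies, ent_mix (hr.push _) fun _ hb => (hr.fiber hb).prodDist (hr.fiber hb)]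
    exact congrArg _ <| expect_congr (hr.push _) fun b hb =>
      ent_prodDist (hr.fiber hb) (hr.fiber hb)
  rw [double, expect_add, ← condEnt_eq_expect, condEnt_eq hr]
  ring

theorem push_fst_condCopies (X : α × β → γ) :
    push (fun z => X (z.1.1, z.2)) (condCopies r) = push X r :=
  eq_of_expect_eq fun F => by
    rw [expect_push, expect_push, condCopies, expect_mix, expect_eq_expect_fiber hr]
    exact expect_congr (hr.push _) fun b hb => by
      simp only [expect_prodDist, Function.comp_apply, (hr.fiber hb).expect_const]

theorem push_snd_condCopies (X : α × β → γ) :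
    push (fun z => X (z.1.2, z.2)) (condCopies r) = push X r :=
  eq_of_expect_eq fun F => by
    rw [expect_push, expect_push, condCopies, expect_mix, expect_eq_expect_fiber hr]
    exact expect_congr (hr.push _) fun b hb => by
      simp only [expect_prodDist, Function.comp_apply, (hr.fiber hb).expect_const]

end Dist

theorem ent_push_add_condCopies {r : G × β → ℝ} (hr : IsDist r) :
    ent (push (fun z => (z.1.1 + z.1.2, z.2)) (condCopies r)) =
      ent (push Prod.snd r) +
        expect (push Prod.snd r) fun b => ent (conv (fiber r b) (fiber r b)) := by
  have law : push (fun z => (z.1.1 + z.1.2, z.2)) (condCopies r) =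
      mix (push Prod.snd r) fun b => conv (fiber r b) (fiber r b) := by
    simp only [conv_eq_push]
    exact push_map_mix (fun z : G × G => z.1 + z.2) _ _
  rw [law, ent_mix (hr.push _) fun _ hb => (hr.fiber hb).conv (hr.fiber hb)]

/-- `ent_pair_add_ent_add_le` for conditionally independent copies of `A` given `(Q, S)`. -/
theorem expect_ent_conv_fiber_self_le {r : G × β → ℝ} (hr : IsDist r) (Q : β → G) (S : β → γ)
    {U : G × γ → β}
    (inverse : Function.LeftInverse U fun b => (Q b, S b)) :
    expect (push Prod.snd r) (fun b => ent (conv (fiber r b) (fiber r b))) + 2 * ent r +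
        3 * ent (push (fun z => S z.2) r) ≤
      2 * (ent (push (fun z => (z.1, S z.2)) r) + ent (push (fun z => (z.1 + Q z.2, S z.2)) r)) +
        ent (push Prod.snd r) := by
  have hc := hr.condCopies
  have key := ent_pair_add_ent_add_le hc (fun z => z.1.1) (fun z => z.1.2) (fun z => Q z.2)
    fun z => S z.2
  have pair : ent (push (fun z => ((z.1.1, z.1.2), Q z.2, S z.2)) (condCopies r)) =
      2 * ent r - ent (push Prod.snd r) := by
    rw [← ent_condCopies hr]
    exact ent_push_of_leftInverse hc (g := Prod.map id U) fun z => Prod.ext rfl (inverse z.2)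
  have sum : ent (push (fun z => (z.1.1 + z.1.2, Q z.2, S z.2)) (condCopies r)) =
      ent (push Prod.snd r) +
        expect (push Prod.snd r) fun b => ent (conv (fiber r b) (fiber r b)) := by
    rw [← ent_push_add_condCopies hr]
    exact ent_push_eq_of_factor hc (Prod.map id fun b => (Q b, S b)) (Prod.map id U) (fun _ => rfl)
      fun z => Prod.ext rfl (inverse z.2).symm
  have condition :
      ent (push (fun z => (Q z.2, S z.2)) (condCopies r)) = ent (push Prod.snd r) := by
    rw [← push_fst_condCopies hr Prod.snd]
    exact ent_push_eq_of_factor hc (fun b => (Q b, S b)) U (fun _ => rfl)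
      fun z => (inverse z.2).symm
  rw [pair, sum, condition, push_fst_condCopies hr fun z => (z.1, S z.2),
    push_snd_condCopies hr fun z => (z.1, S z.2), push_fst_condCopies hr fun z => S z.2,
    push_fst_condCopies hr fun z => (z.1 + Q z.2, S z.2),
    push_snd_condCopies hr fun z => (z.1 + Q z.2, S z.2)] at key
  linarith

theorem expect_ent_conv_fiber_condSums_le [Module (ZMod 2) G] {p q : G → ℝ} (hp : IsDist p)
    (hq : IsDist q) :
    expect (push Prod.snd (condSums p p q q)) (fun z =>
        ent (conv (fiber (condSums p p q q) z) (fiber (condSums p p q q) z))) +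
        2 * ent (condSums p p q q) + 3 * ent (conv (conv p q) (conv p q)) ≤
      8 * ent (conv p q) + ent (conv p p) + ent (conv q q) := by
  have key := expect_ent_conv_fiber_self_le (hp.condSums hp hq hq) Prod.snd (fun z => z.1 + z.2)
    (U := fun z => (z.2 - z.1, z.1)) fun z => by simp
  have total : push (fun z => z.2.1 + z.2.2) (condSums p p q q) =
      conv (conv p q) (conv p q) := by
    rw [← push_snd_jointSum, ← push_fst_add_condSums, push_push]
    rfl
  rw [push_fst_add_condSums, push_fst_add_snd_condSums, total,
    ent_jointSum (hp.conv hq) (hp.conv hq)] at key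
  have := ent_prodDist (hp.conv hp) (hq.conv hq)
  rw [← push_snd_condSums] at this
  linarith

end Diagonal

section Uniform

variable {α β G : Type*} [Finite α] [AddCommGroup G] [Finite G]

omit [Finite α] in
theorem exists_pos_of_push_pos {p : α → ℝ} (hp : IsDist p) {f : α → β} {b : β}
    (hb : 0 < push f p b) : ∃ a, 0 < p a ∧ f a = b := by
  by_contra! h
  refine hb.ne' (finsum_mem_eq_zero_of_forall_eq_zero fun a ha => ?_)
  exact ((hp.1 a).eq_or_lt.resolve_right fun h0 => h a h0 ha).symm

theorem ent_le_log_card {p : α → ℝ} (hp : IsDist p) {s : Finset α} (hs : ∀ a, 0 < p a → a ∈ s) :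
    ent p ≤ log s.card := by
  classical
  cases nonempty_fintype α
  set t : Finset α := {a | 0 < p a}
  have sum_support (F : α → ℝ) : ∑ a ∈ t, p a * F a = expect p F := by
    rw [expect_eq_sum]
    refine Finset.sum_subset (Finset.subset_univ t) fun a _ ha => ?_
    have : p a = 0 := (hp.1 a).antisymm' (not_lt.1 (by simpa [t] using ha))
    rw [this, zero_mul]
  have jensen : ∑ a ∈ t, p a * log (p a)⁻¹ ≤ log (∑ a ∈ t, p a * (p a)⁻¹) :=
    strictConcaveOn_log_Ioi.concaveOn.le_map_sum (fun a _ => hp.1 a)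
      (by simpa [hp.expect_const] using sum_support fun _ => 1)
      fun a ha => inv_pos.2 (by simpa [t] using ha)
  have card_support : ∑ a ∈ t, p a * (p a)⁻¹ = t.card := by
    rw [Finset.sum_congr rfl fun a ha => mul_inv_cancel₀ (ne_of_gt (by simpa [t] using ha))]
    simp
  obtain ⟨a, ha⟩ := hp.exists_pos
  have card_pos : 0 < t.card := Finset.card_pos.2 ⟨a, by simpa [t] using ha⟩
  have card_le : t.card ≤ s.card := Finset.card_le_card fun a ha => hs a (by simpa [t] using ha)
  calc ent p = ∑ a ∈ t, p a * log (p a)⁻¹ := by simp only [ent_eq_expect, log_inv, sum_support]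
    _ ≤ log t.card := jensen.trans_eq (by rw [card_support])
    _ ≤ log s.card := log_le_log (by exact_mod_cast card_pos) (by exact_mod_cast card_le)

theorem ent_push_eq_zero [Finite β] {p : α → ℝ} (hp : IsDist p) {f : α → β}
    (h : ∀ a b, 0 < p a → 0 < p b → f a = f b) : ent (push f p) = 0 := by
  obtain ⟨a, ha⟩ := hp.exists_pos
  refine le_antisymm ?_ (ent_nonneg (hp.push f))
  refine (ent_le_log_card (hp.push f) (s := {f a}) fun b hb => ?_).trans_eq (by simp)
  obtain ⟨a', ha', rfl⟩ := exists_pos_of_push_pos hp hb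
  exact Finset.mem_singleton.2 (h a' a ha' ha)

theorem expect_unifOn (s : Finset α) (F : α → ℝ) :
    expect (unifOn (s : Set α)) F = (s.card : ℝ)⁻¹ * ∑ a ∈ s, F a := by
  classical
  cases nonempty_fintype α
  simp [expect_eq_sum, unifOn, Set.indicator_apply, Finset.sum_ite_mem, Finset.mul_sum]

theorem isDist_unifOn {s : Set α} (hs : s.Nonempty) : IsDist (unifOn s) := by
  lift s to Finset α using s.toFinite
  refine isDist_iff_expect_one.2
    ⟨fun a => Set.indicator_nonneg (fun _ _ => inv_nonneg.2 (Nat.cast_nonneg _)) a, ?_⟩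
  have card_ne_zero : (s.card : ℝ) ≠ 0 := by exact_mod_cast (Finset.coe_nonempty.1 hs).card_pos.ne'
  simp [expect_unifOn, card_ne_zero]

theorem ent_unifOn {s : Set α} (hs : s.Nonempty) : ent (unifOn s) = log (Nat.card s) := by
  have uniform (a : α) (ha : 0 < unifOn s a) : -log (unifOn s a) = log (Nat.card s) := by
    rw [unifOn, Set.indicator_of_mem (Set.mem_of_indicator_ne_zero ha.ne'), log_inv, neg_neg]
  rw [ent_eq_expect, expect_congr (isDist_unifOn hs) uniform, (isDist_unifOn hs).expect_const]

theorem push_unifOn (s : Finset α) (f : α → β) (b : β) :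
    push f (unifOn (s : Set α)) b = (s.card : ℝ)⁻¹ * ((s : Set α) ∩ f ⁻¹' {b}).ncard := by
  classical
  cases nonempty_fintype α
  have fiber_eq : (s : Set α) ∩ f ⁻¹' {b} = (Finset.univ.filter (f · = b) ∩ s : Finset α) := by
    ext
    simp [and_comm]
  rw [fiber_eq, Set.ncard_coe_finset, push_eq_sum]
  simp [unifOn, Set.indicator_apply, mul_comm]

theorem ent_unifOn_sub_ent_push [Finite β] {s : Finset α} (hs : s.Nonempty) (f : α → β) :
    ent (unifOn (s : Set α)) - ent (push f (unifOn (s : Set α))) =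
      (s.card : ℝ)⁻¹ * ∑ a ∈ s, log ((s : Set α) ∩ f ⁻¹' {f a}).ncard := by
  have card_ne_zero : (s.card : ℝ) ≠ 0 := by exact_mod_cast hs.card_pos.ne'
  have log_push (a : α) (ha : a ∈ s) : -log (push f (unifOn (s : Set α)) (f a)) =
      log s.card - log ((s : Set α) ∩ f ⁻¹' {f a}).ncard := by
    have fiber_ne_zero : (((s : Set α) ∩ f ⁻¹' {f a}).ncard : ℝ) ≠ 0 := by
      have fiber_nonempty : ((s : Set α) ∩ f ⁻¹' {f a}).Nonempty := ⟨a, ha, rfl⟩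
      exact_mod_cast ((Set.ncard_pos (Set.toFinite _)).2 fiber_nonempty).ne'
    rw [push_unifOn, log_mul (inv_ne_zero card_ne_zero) fiber_ne_zero, log_inv]
    ring
  rw [ent_unifOn (Finset.coe_nonempty.2 hs), ent_eq_expect (push f _), expect_push, expect_unifOn]
  simp only [Function.comp_apply]
  rw [Finset.sum_congr rfl log_push, Finset.sum_sub_distrib, Finset.sum_const, nsmul_eq_mul,
    mul_sub, inv_mul_cancel_left₀ card_ne_zero, Nat.card_eq_fintype_card]
  simp

theorem ent_conv_unifOn_le [DecidableEq G] {A B : Finset G} (hA : A.Nonempty) (hB : B.Nonempty) :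
    ent (conv (unifOn (A : Set G)) (unifOn (B : Set G))) ≤ log (A + B).card := by
  have dist_A := isDist_unifOn (Finset.coe_nonempty.2 hA)
  have dist_B := isDist_unifOn (Finset.coe_nonempty.2 hB)
  refine ent_le_log_card (dist_A.conv dist_B) fun z hz => ?_
  rw [conv_eq_push] at hz
  obtain ⟨⟨x, y⟩, pos, rfl⟩ := exists_pos_of_push_pos (dist_A.prodDist dist_B) hz
  exact Finset.add_mem_add (Set.mem_of_indicator_ne_zero (left_ne_zero_of_mul pos.ne'))
    (Set.mem_of_indicator_ne_zero (right_ne_zero_of_mul pos.ne'))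

theorem ent_unifOn_le_of_periodic {q : G → ℝ} (hq : IsDist q) (H : AddSubgroup G)
    (h : ∀ v ∈ H, Function.Periodic q v) : ent (unifOn (H : Set G)) ≤ ent q := by
  have hH : IsDist (unifOn (H : Set G)) := isDist_unifOn ⟨0, H.zero_mem⟩
  have absorb : conv (unifOn (H : Set G)) q = q := funext fun z => by
    have shift (v : G) (hv : 0 < unifOn (H : Set G) v) : q (z - v) = q z :=
      (h v (Set.mem_of_indicator_ne_zero hv.ne')).sub_eq z
    exact (expect_congr hH shift).trans (hH.expect_const _)
  exact (ent_le_ent_conv_left hH hq).trans_eq (by rw [absorb])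

/-- Equality in `H(Y) ≤ H(X + Y)` forces equality in Jensen's inequality at every point. -/
theorem sub_eq_sub_of_ent_conv_le {p q : G → ℝ} (hp : IsDist p) (hq : IsDist q)
    (h : ent (conv p q) ≤ ent q) {x y : G} (hx : 0 < p x) (hy : 0 < p y) (z : G) :
    q (z - x) = q (z - y) := by
  cases nonempty_fintype G
  have conv_apply (z : G) : conv p q z = ∑ x, p x * q (z - x) := finsum_eq_sum_of_fintype _
  have sum_p : ∑ x, p x = 1 := by rw [← finsum_eq_sum_of_fintype, hp.2]
  have jensen (z : G) (_ : z ∈ Finset.univ) :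
      ∑ x, p x * negMulLog (q (z - x)) ≤ negMulLog (conv p q z) := by
    rw [conv_apply]
    exact concaveOn_negMulLog.le_map_sum (fun x _ => hp.1 x) sum_p fun x _ => hq.1 (z - x)
  have ent_q : ∑ z, ∑ x, p x * negMulLog (q (z - x)) = ent q := by
    have translate (x : G) : ∑ z, negMulLog (q (z - x)) = ent q :=
      ((Equiv.subRight x).sum_comp fun z => negMulLog (q z)).trans (ent_eq_sum q).symm
    rw [Finset.sum_comm]
    simp only [← Finset.mul_sum, translate, ← Finset.sum_mul, sum_p, one_mul]
  have equality := (Finset.sum_eq_sum_iff_of_le jensen).1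
    ((Finset.sum_le_sum jensen).antisymm (by rw [ent_q, ← ent_eq_sum]; exact h)) z
      (Finset.mem_univ z)
  rw [conv_apply] at equality
  exact (strictConcaveOn_negMulLog.map_sum_eq_iff_of_nonneg (fun x _ => hp.1 x) sum_p
    fun x _ => hq.1 (z - x)).1 equality.symm (Finset.mem_univ x) hx.ne' (Finset.mem_univ y) hy.ne'

end Uniform

section BaseCase

variable {β γ G : Type*} [Finite β] [Finite γ] [AddCommGroup G] [Finite G]

/-- The part of `tau` that involves only one of the two distributions. -/
def tauPenalty (p₀ p : G → ℝ) : ℝ := 1 / 50 * ent (conv p p₀) - 51 / 100 * ent p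

/-- The functional minimised in the base case of the descent. It rewards pairs of large entropy and
small doubling that stay close to the reference pair `(p₀, q₀)`. -/
def tau (p₀ q₀ p q : G → ℝ) : ℝ := ent (conv p q) + tauPenalty p₀ p + tauPenalty q₀ q

section Continuity

variable {X : Type*} [TopologicalSpace X] {P Q : X → G → ℝ}

omit [AddCommGroup G] in
@[fun_prop]
theorem continuous_ent (hP : Continuous P) : Continuous fun x => ent (P x) := by
  cases nonempty_fintype G
  simp only [ent_eq_sum]
  fun_prop

@[fun_prop]
theorem continuous_conv (hP : Continuous P) (hQ : Continuous Q) :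
    Continuous fun x => conv (P x) (Q x) := by
  cases nonempty_fintype G
  refine continuous_pi fun z => ?_
  simp only [conv, finsum_eq_sum_of_fintype]
  fun_prop

end Continuity

theorem exists_forall_tau_le {p₀ q₀ : G → ℝ} (hp₀ : IsDist p₀) (hq₀ : IsDist q₀) :
    ∃ p q : G → ℝ, IsDist p ∧ IsDist q ∧
      ∀ p' q', IsDist p' → IsDist q' → tau p₀ q₀ p q ≤ tau p₀ q₀ p' q' := by
  cases nonempty_fintype G
  have mem_stdSimplex (p : G → ℝ) : p ∈ stdSimplex ℝ G ↔ IsDist p := by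
    rw [IsDist, finsum_eq_sum_of_fintype]
    rfl
  have continuous_tau : Continuous fun x : (G → ℝ) × (G → ℝ) => tau p₀ q₀ x.1 x.2 := by
    unfold tau tauPenalty
    fun_prop
  obtain ⟨⟨p, q⟩, ⟨hp, hq⟩, minimal⟩ :=
    ((isCompact_stdSimplex ℝ G).prod (isCompact_stdSimplex ℝ G)).exists_isMinOn
      ⟨(p₀, q₀), (mem_stdSimplex _).2 hp₀, (mem_stdSimplex _).2 hq₀⟩ continuous_tau.continuousOn
  exact ⟨p, q, (mem_stdSimplex _).1 hp, (mem_stdSimplex _).1 hq, fun p' q' hp' hq' =>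
    minimal (a := (p', q')) ⟨(mem_stdSimplex _).2 hp', (mem_stdSimplex _).2 hq'⟩⟩

theorem expect_tauPenalty_fiber_le {r : G × β → ℝ} (hr : IsDist r) {p : G → ℝ} (hp : IsDist p) :
    expect (push Prod.snd r) (fun b => tauPenalty p (fiber r b)) ≤
      1 / 50 * ent (conv (push Prod.fst r) p) - 51 / 100 * condEnt r := by
  simp only [tauPenalty, expect_sub, expect_const_mul, ← condEnt_eq_expect]
  linarith [expect_ent_conv_fiber_le hr hp]

section Minimizer

variable {p₀ q₀ : G → ℝ} (hp₀ : IsDist p₀) (hq₀ : IsDist q₀) {m : ℝ}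
  (hm : ∀ p q : G → ℝ, IsDist p → IsDist q → m ≤ tau p₀ q₀ p q)
include hp₀ hq₀ hm

theorem le_condEnt_sumJoint_add {r₁ : G × β → ℝ} {r₂ : G × γ → ℝ} (h₁ : IsDist r₁)
    (h₂ : IsDist r₂) :
    m ≤ condEnt (sumJoint r₁ r₂) +
      (1 / 50 * ent (conv (push Prod.fst r₁) p₀) - 51 / 100 * condEnt r₁) +
      (1 / 50 * ent (conv (push Prod.fst r₂) q₀) - 51 / 100 * condEnt r₂) := by
  have average : m ≤ expect (push Prod.snd r₁) fun u => expect (push Prod.snd r₂) fun w =>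
      tau p₀ q₀ (fiber r₁ u) (fiber r₂ w) := by
    rw [← (h₁.push Prod.snd).expect_const m]
    refine expect_mono (h₁.push _) fun u hu => ?_
    rw [← (h₂.push Prod.snd).expect_const m]
    exact expect_mono (h₂.push _) fun w hw => hm _ _ (h₁.fiber hu) (h₂.fiber hw)
  simp only [tau, expect_add, (h₂.push Prod.snd).expect_const, (h₁.push Prod.snd).expect_const,
    ← condEnt_sumJoint h₁ h₂] at average
  linarith [expect_tauPenalty_fiber_le h₁ hp₀, expect_tauPenalty_fiber_le h₂ hq₀]

theorem le_expect_ent_conv_fiber_self_add {r : G × β → ℝ} (hr : IsDist r) :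
    m ≤ expect (push Prod.snd r) (fun b => ent (conv (fiber r b) (fiber r b))) +
      (1 / 50 * ent (conv (push Prod.fst r) p₀) - 51 / 100 * condEnt r) +
      (1 / 50 * ent (conv (push Prod.fst r) q₀) - 51 / 100 * condEnt r) := by
  have average : m ≤ expect (push Prod.snd r) fun b => tau p₀ q₀ (fiber r b) (fiber r b) := by
    rw [← (hr.push Prod.snd).expect_const m]
    exact expect_mono (hr.push _) fun b hb => hm _ _ (hr.fiber hb) (hr.fiber hb)
  simp only [tau, expect_add] at average
  linarith [expect_tauPenalty_fiber_le hr hp₀, expect_tauPenalty_fiber_le hr hq₀]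

end Minimizer

section Doubling

variable {p q : G → ℝ} (hp : IsDist p) (hq : IsDist q)
include hp hq

theorem ent_conv_conv_self_left_add_ent_le :
    ent (conv (conv p q) p) + ent q ≤ 2 * ent (conv p q) := by
  have kv := ent_conv_conv_add_ent_le hp hq hp
  rwa [conv_comm q p, ← two_mul] at kv

theorem ent_conv_self_add_ent_le : ent (conv p p) + ent q ≤ 2 * ent (conv p q) := by
  have le := ent_le_ent_conv_left (hp.conv hp) hq
  rw [conv_assoc, conv_comm p (conv p q)] at le
  exact (add_le_add_left le _).trans (ent_conv_conv_self_left_add_ent_le hp hq)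

theorem ent_conv_conv_self_add_ent_le :
    ent (conv (conv p q) (conv p q)) + ent p ≤ ent (conv (conv p q) p) + ent (conv p q) := by
  rw [← conv_assoc]
  exact ent_conv_conv_add_ent_le (hp.conv hq) hp hq

end Doubling

/-- Minimality is tested on the sums, and on the fibers of sums, of independent copies of `p`
and `q`. -/
theorem dRuzsa_nonpos_of_forall_tau_le [Module (ZMod 2) G] {p₀ q₀ p q : G → ℝ} (hp₀ : IsDist p₀)
    (hq₀ : IsDist q₀) (hp : IsDist p) (hq : IsDist q)
    (hmin : ∀ p' q', IsDist p' → IsDist q' → tau p₀ q₀ p q ≤ tau p₀ q₀ p' q') :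
    dRuzsa p q ≤ 0 := by
  have hT := hp.conv hq
  have double := hmin _ _ (hp.conv hp) (hq.conv hq)
  have sum := hmin _ _ hT hT
  have cond_double := le_condEnt_sumJoint_add hp₀ hq₀ hmin (hp.jointSum hp) (hq.jointSum hq)
  have cond_sum := le_condEnt_sumJoint_add hp₀ hq₀ hmin (hp.jointSum hq) (hq.jointSum hp)
  have cond_diag := le_expect_ent_conv_fiber_self_add hp₀ hq₀ hmin (hp.condSums hp hq hq)
  rw [push_fst_jointSum hp, push_fst_jointSum hq, condEnt_jointSum hp hp, condEnt_jointSum hq hq,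
    ← condSums, condEnt_condSums hp hp hq hq, sDouble, sDouble] at cond_double
  rw [push_fst_jointSum hp, push_fst_jointSum hq, condEnt_jointSum hp hq, condEnt_jointSum hq hp,
    ← condSums, condEnt_condSums hp hq hq hp, ent_condSums_rotate hp hp hq hq, sDouble, sDouble,
    conv_comm q p] at cond_sum
  rw [push_fst_condSums hp hq, condEnt_condSums hp hp hq hq] at cond_diag
  have diag := expect_ent_conv_fiber_condSums_le hp hq
  have kv_double_p := ent_conv_conv_add_ent_le hp hp hp₀
  have kv_double_q := ent_conv_conv_add_ent_le hq hq hq₀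
  have kv_sum_p := ent_conv_conv_add_ent_le hq hp hp₀
  have kv_sum_q := ent_conv_conv_add_ent_le hp hq hq₀
  have triple := ent_conv_conv_self_left_add_ent_le hp hq
  have quadruple := ent_conv_conv_self_add_ent_le hp hq
  have double_p := ent_conv_self_add_ent_le hp hq
  have double_q := ent_conv_self_add_ent_le hq hp
  rw [conv_comm q p] at kv_sum_p double_q
  rw [tau, tau, conv_conv_conv_comm] at double
  simp only [tau, tauPenalty, dRuzsa] at *
  linarith

/-- The additive group of periods of `q`. -/
def periods (q : G → ℝ) : AddSubgroup G where
  carrier := {v | Function.Periodic q v}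
  zero_mem' z := by rw [add_zero]
  add_mem' hv hw := hv.add_period hw
  neg_mem' hv := hv.neg

theorem exists_submodule_of_dRuzsa_nonpos [Module (ZMod 2) G] {p q : G → ℝ} (hp : IsDist p)
    (hq : IsDist q) (h : dRuzsa p q ≤ 0) :
    ∃ V : Submodule (ZMod 2) G, ent (unifOn (V : Set G)) ≤ ent q ∧ ent (push V.mkQ p) = 0 := by
  have ent_conv_le : ent (conv p q) ≤ ent q := by
    have := ent_le_ent_conv_left hp hq
    rw [dRuzsa] at h
    linarith
  have : Finite (G ⧸ AddSubgroup.toZModSubmodule 2 (periods q)) :=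
    .of_surjective _ (Submodule.mkQ_surjective _)
  refine ⟨AddSubgroup.toZModSubmodule 2 (periods q),
    ent_unifOn_le_of_periodic hq (periods q) fun _ hv => hv,
    ent_push_eq_zero hp fun x y hx hy => (Submodule.Quotient.eq _).2 fun z => ?_⟩
  simpa [add_sub_assoc] using sub_eq_sub_of_ent_conv_le hp hq ent_conv_le hy hx (z + x)

theorem stA_base : StA (499 / 1000) 2 (1 / 10) := by
  intro n p₀ q₀ hp₀ hq₀ h
  obtain ⟨p, q, hp, hq, hmin⟩ := exists_forall_tau_le hp₀ hq₀
  have doubling := dRuzsa_nonpos_of_forall_tau_le hp₀ hq₀ hp hq hmin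
  obtain ⟨V, ent_le, ent_eq_zero⟩ := exists_submodule_of_dRuzsa_nonpos hp hq doubling
  have swapped := hmin q₀ p₀ hq₀ hp₀
  have drop := sDouble_sub_sDouble_push_le_left hp₀ hp V.mkQ
  have drop_le := sDouble_le_right (hp₀.push V.mkQ) (hp.push V.mkQ)
  have le_left := ent_le_ent_conv_left hp hq
  have le_right := ent_le_ent_conv_right hp hq
  have p_le := ent_le_ent_conv_left hp hp₀
  have q_le := ent_le_ent_conv_left hq hq₀
  have q₀_le := ent_le_ent_conv_right hq hq₀
  have push_le := ent_push_le hq₀ V.mkQ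
  have nonneg_p₀ := ent_nonneg hp₀
  have nonneg_q₀ := ent_nonneg hq₀
  simp only [tau, tauPenalty, conv_comm q₀ p₀] at swapped
  rw [sDouble, conv_comm p₀ p] at drop
  rw [dRuzsa] at doubling
  exact ⟨V, by linarith, by linarith⟩

end BaseCase

section Compression

/-- The logarithm of the size of the kernel of a linear map. -/
def kerSize {R M N : Type*} [Ring R] [AddCommGroup M] [AddCommGroup N] [Module R M] [Module R N]
    (f : M →ₗ[R] N) : ℝ :=
  log (Nat.card (LinearMap.ker f))

section LinearMaps

variable {R M N P : Type*} [Ring R] [AddCommGroup M] [AddCommGroup N] [AddCommGroup P]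
  [Module R M] [Module R N] [Module R P]

theorem kerSize_id : kerSize (LinearMap.id : M →ₗ[R] M) = 0 := by
  simp [kerSize]

theorem kerSize_comp_le [Finite M] [Finite N] (g : N →ₗ[R] P) (f : M →ₗ[R] N) :
    kerSize (g ∘ₗ f) ≤ kerSize f + kerSize g := by
  have f_invFun (x : M) : f (Function.invFun f (f x)) = f x := Function.invFun_eq ⟨x, rfl⟩
  let φ : LinearMap.ker (g ∘ₗ f) → LinearMap.ker f × LinearMap.ker g := fun x =>
    (⟨x - Function.invFun f (f x), by simp [f_invFun]⟩, ⟨f x, x.2⟩)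
  have φ_injective : Function.Injective φ := fun x y h => by
    have kernel_part := congrArg (fun z => (z.1 : M)) h
    have image_eq : f x = f y := congrArg (fun z => (z.2 : N)) h
    simp only [φ, image_eq, sub_left_inj] at kernel_part
    exact Subtype.ext kernel_part
  have card_le := Nat.card_le_card_of_injective φ φ_injective
  rw [Nat.card_prod] at card_le
  rw [kerSize, kerSize, kerSize,
    ← log_mul (mod_cast Nat.card_pos.ne') (mod_cast Nat.card_pos.ne')]
  exact log_le_log (mod_cast Nat.card_pos) (mod_cast card_le)

theorem ent_push_mkQ_ker [Finite M] [Finite N] (f : M →ₗ[R] N) {p : M → ℝ} (hp : IsDist p) :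
    ent (push (LinearMap.ker f).mkQ p) = ent (push f p) := by
  have : Finite (M ⧸ LinearMap.ker f) := .of_surjective _ (Submodule.mkQ_surjective _)
  refine ent_push_eq_of_factor hp (fun y => (LinearMap.ker f).mkQ (Function.invFun f y))
    ((LinearMap.ker f).liftQ f le_rfl) (fun x => ?_) fun x => ?_
  · rw [← sub_eq_zero, ← map_sub, ← LinearMap.mem_ker, Submodule.ker_mkQ, LinearMap.mem_ker,
      map_sub, Function.invFun_eq (f := f) ⟨x, rfl⟩, sub_self]
  · exact ((LinearMap.ker f).liftQ_apply f x).symm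

end LinearMaps

theorem exists_end_ker_eq {K E : Type*} [DivisionRing K] [AddCommGroup E] [Module K E]
    (V : Submodule K E) : ∃ f : Module.End K E, LinearMap.ker f = V := by
  obtain ⟨W, hW⟩ := V.exists_isCompl
  exact ⟨W.projection V hW.symm, Submodule.ker_projection hW.symm⟩

/-- `StA η L c` for some admissible constants `L` and `c`. -/
def ExistsStA (η : ℝ) : Prop := ∃ L c : ℝ, 0 ≤ L ∧ 0 < c ∧ c < 1 ∧ StA η L c

/-- Every quotient map whose kernel has log-size at most `ℓ` decreases the entropy of `p` by less
than `δ`. Quotients of `𝔽₂ⁿ` are represented by endomorphisms, so that they can be composed. -/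
def Incompressible {n : ℕ} (ℓ δ : ℝ) (p : Fvec n → ℝ) : Prop :=
  ∀ f : Module.End (ZMod 2) (Fvec n), kerSize f ≤ ℓ → ent p - ent (push f p) < δ

variable {n : ℕ} {β γ : Type*} [Finite β] [Finite γ]

theorem push_comp_end (g f : Module.End (ZMod 2) (Fvec n)) (p : Fvec n → ℝ) :
    push (g ∘ₗ f) p = push g (push f p) :=
  (push_push g f p).symm

theorem StA.mono {η η' L c : ℝ} (h : StA η L c) (le : η ≤ η') : StA η' L c :=
  fun n p q hp hq hs => h n p q hp hq <| hs.trans <| mul_le_mul_of_nonneg_right (by linarith)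
    (add_nonneg (ent_nonneg hp) (ent_nonneg hq))

theorem ExistsStA.mono {η η' : ℝ} (h : ExistsStA η) (le : η ≤ η') : ExistsStA η' := by
  obtain ⟨L, c, hL, hc, hc', hA⟩ := h
  exact ⟨L, c, hL, hc, hc', hA.mono le⟩

theorem StA.exists_end {η L c : ℝ} (hA : StA η L c) {p q : Fvec n → ℝ} (hp : IsDist p)
    (hq : IsDist q) (h : η * (ent p + ent q) ≤ sDouble p q) :
    ∃ f : Module.End (ZMod 2) (Fvec n), kerSize f ≤ L * (ent p + ent q) ∧
      ent (push f p) + ent (push f q) ≤ (1 - c) * (ent p + ent q) := by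
  obtain ⟨V, size, drop⟩ := hA n p q hp hq (by rw [sDouble] at h; linarith)
  obtain ⟨f, rfl⟩ := exists_end_ker_eq V
  rw [ent_unifOn ⟨0, zero_mem _⟩] at size
  rw [ent_push_mkQ_ker f hp, ent_push_mkQ_ker f hq] at drop
  exact ⟨f, size, drop⟩

theorem Incompressible.pos {ℓ δ : ℝ} {p : Fvec n → ℝ} (h : Incompressible ℓ δ p) (hℓ : 0 ≤ ℓ) :
    0 < δ := by
  simpa [push_id] using h LinearMap.id (by rwa [kerSize_id])

theorem exists_end_of_descent {Φ : Module.End (ZMod 2) (Fvec n) → ℝ}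
    {P : Module.End (ZMod 2) (Fvec n) → Prop} {N : ℕ} {ℓ δ : ℝ} (hℓ : 0 ≤ ℓ)
    (start : Φ LinearMap.id ≤ N * δ)
    (step : ∀ f, ¬P f → 0 < Φ f ∧
      ∃ g : Module.End (ZMod 2) (Fvec n), kerSize g ≤ ℓ ∧ Φ (g ∘ₗ f) ≤ Φ f - δ) :
    ∃ f, kerSize f ≤ N * ℓ ∧ P f := by
  by_contra! never
  have descend (j : ℕ) (hj : j ≤ N) :
      ∃ f : Module.End (ZMod 2) (Fvec n), kerSize f ≤ j * ℓ ∧ Φ f ≤ (N - j) * δ := by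
    induction j with
    | zero => exact ⟨LinearMap.id, by simp [kerSize_id], by simpa using start⟩
    | succ j ih =>
      obtain ⟨f, size, le⟩ := ih (Nat.le_of_succ_le hj)
      have size_le : (j : ℝ) * ℓ ≤ N * ℓ := by gcongr; exact Nat.le_of_succ_le hj
      obtain ⟨-, g, size', le'⟩ := step f (never f (size.trans size_le))
      refine ⟨g ∘ₗ f, ?_, ?_⟩ <;> push_cast
      · linarith [kerSize_comp_le g f]
      · linarith
  obtain ⟨f, size, le⟩ := descend N le_rfl
  rw [sub_self, zero_mul] at le
  exact (step f (never f size)).1.not_ge le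

theorem ExistsStA.exists_sDouble_lt {ρ ε : ℝ} (hA : ExistsStA ρ) (hρ : 0 < ρ) (hε : 0 < ε) :
    ∃ L, 0 ≤ L ∧ ∀ (n : ℕ) (p q : Fvec n → ℝ) (K : ℝ), IsDist p → IsDist q → ent p ≤ K →
      Incompressible (L * K) (ε * K) p → sDouble p q < ρ * (ent p + ent q) + 2 * ε * K := by
  obtain ⟨L₀, c, hL₀, hc, -, hA⟩ := hA
  obtain ⟨N, hN⟩ := exists_nat_ge ((1 + 1 / ρ) / (c * ε))
  rw [div_le_iff₀ (by positivity)] at hN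
  refine ⟨N * (L₀ * (1 + 1 / ρ)), by positivity, fun n p q K hp hq ent_le incompressible => ?_⟩
  have hK : 0 ≤ K := (ent_nonneg hp).trans ent_le
  have hεK := incompressible.pos (by positivity)
  by_contra! large
  have sum_le : ent p + ent q ≤ (1 + 1 / ρ) * K := by
    have : ent q ≤ K / ρ := by
      rw [le_div_iff₀' hρ]
      linarith [sDouble_le_left hp hq, mul_nonneg hρ.le (ent_nonneg hp)]
    linarith [this, (by ring : (1 + 1 / ρ) * K = K + K / ρ)]
  obtain ⟨f, size, drop⟩ : ∃ f : Module.End (ZMod 2) (Fvec n),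
      kerSize f ≤ N * (L₀ * (1 + 1 / ρ) * K) ∧ ε * K ≤ ent p - ent (push f p) := by
    refine exists_end_of_descent (Φ := fun f => ent (push f p) + ent (push f q))
      (δ := c * (ε * K)) (by positivity) ?_ fun f small => ?_
    · rw [LinearMap.id_coe, push_id, push_id]
      nlinarith
    have le_sum := add_le_add (ent_push_le hp f) (ent_push_le hq f)
    have large_push : ρ * (ent (push f p) + ent (push f q)) + ε * K ≤
        sDouble (push f p) (push f q) := by
      linarith [sDouble_sub_sDouble_push_le_left hp hq f, mul_le_mul_of_nonneg_left le_sum hρ.le]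
    have nonneg_p := ent_nonneg (hp.push f)
    have nonneg_q := ent_nonneg (hq.push f)
    have sum_ge : ε * K ≤ ent (push f p) + ent (push f q) := by
      have := mul_nonneg hρ.le (add_nonneg nonneg_p nonneg_q)
      linarith [sDouble_le_left (hp.push f) (hq.push f)]
    obtain ⟨g, size, drop⟩ := hA.exists_end (hp.push f) (hq.push f) (by linarith)
    refine ⟨by linarith, g, size.trans ?_, ?_⟩
    · rw [mul_assoc]
      exact mul_le_mul_of_nonneg_left (le_sum.trans sum_le) hL₀
    · rw [push_comp_end, push_comp_end]
      nlinarith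
  exact (incompressible f (by linarith)).not_ge drop

section Averages

variable {G G' : Type*} [AddCommGroup G] [Finite G] [AddCommGroup G'] [Finite G']

theorem expect_sDouble_fiber_sub_push_le {p : G → ℝ} {r : G × β → ℝ} (hp : IsDist p)
    (hr : IsDist r) {F : Type*} [FunLike F G G'] [AddMonoidHomClass F G G'] (f : F) :
    expect (push Prod.snd r) (fun w => sDouble p (fiber r w)) -
        expect (push Prod.snd r) (fun w => sDouble (push f p) (push f (fiber r w))) ≤
      ent (push Prod.fst r) - ent (push f (push Prod.fst r)) := by
  refine le_trans ?_ (condEnt_sub_condEnt_push_map_le hr f)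
  rw [condEnt_push_map hr, condEnt_eq_expect, ← expect_sub, ← expect_sub]
  exact expect_mono (hr.push _) fun w hw =>
    sDouble_sub_sDouble_push_le_right hp (hr.fiber hw) f

theorem expect_sDouble_fiber_le_right {p : G → ℝ} {r : G × β → ℝ} (hp : IsDist p)
    (hr : IsDist r) : expect (push Prod.snd r) (fun w => sDouble p (fiber r w)) ≤ condEnt r :=
  expect_mono (hr.push _) fun _ hw => sDouble_le_right hp (hr.fiber hw)

theorem exists_le_sDouble_push_fiber {ρ c : ℝ} (hρ : 0 ≤ ρ) {p : G → ℝ} {r : G × β → ℝ}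
    (hp : IsDist p) (hr : IsDist r) {F : Type*} [FunLike F G G'] [AddMonoidHomClass F G G'] (f : F)
    (h : ρ * (ent p + condEnt r) + c + (ent (push Prod.fst r) - ent (push f (push Prod.fst r))) ≤
      expect (push Prod.snd r) fun w => sDouble p (fiber r w)) :
    ∃ w, 0 < push Prod.snd r w ∧ ρ * (ent (push f p) + ent (push f (fiber r w))) + c ≤
      sDouble (push f p) (push f (fiber r w)) := by
  have average : c ≤ expect (push Prod.snd r) fun w =>
      sDouble (push f p) (push f (fiber r w)) -
        ρ * (ent (push f p) + ent (push f (fiber r w))) := by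
    have avg_le : expect (push Prod.snd r) (fun w => ent (push f (fiber r w))) ≤ condEnt r :=
      expect_mono (hr.push _) fun w hw => ent_push_le (hr.fiber hw) f
    have := mul_le_mul_of_nonneg_left (add_le_add (ent_push_le hp f) avg_le) hρ
    rw [expect_sub, expect_const_mul, expect_add, (hr.push Prod.snd).expect_const]
    linarith [expect_sDouble_fiber_sub_push_le hp hr f]
  obtain ⟨w, hw, le⟩ := exists_le_of_le_expect (hr.push _) average
  exact ⟨w, hw, by linarith⟩

end Averages

theorem ExistsStA.exists_expect_sDouble_lt {ρ ε : ℝ} (hA : ExistsStA ρ) (hρ : 0 < ρ)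
    (hε : 0 < ε) :
    ∃ L, 0 ≤ L ∧ ∀ (n : ℕ) (β : Type*) [Finite β] (p : Fvec n → ℝ) (r : Fvec n × β → ℝ) (K : ℝ),
      IsDist p → IsDist r → ent (push Prod.fst r) ≤ K →
      Incompressible (L * K) (ε / 2 * K) (push Prod.fst r) →
      expect (push Prod.snd r) (fun w => sDouble p (fiber r w)) <
        ρ * (ent p + condEnt r) + ε * K := by
  obtain ⟨L₁, hL₁, sDouble_lt⟩ := hA.exists_sDouble_lt hρ (show 0 < ε * ρ / 4 by positivity)
  obtain ⟨N, hN⟩ := exists_nat_ge (4 / (ρ * ε))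
  rw [div_le_iff₀ (by positivity)] at hN
  refine ⟨N * (L₁ / ρ), by positivity, fun n β _ p r K hp hr fst_le incompressible => ?_⟩
  have hK : 0 ≤ K := (ent_nonneg (hr.push _)).trans fst_le
  have hεK := incompressible.pos (by positivity)
  by_contra! large
  have ent_le : ent p ≤ K / ρ := by
    rw [le_div_iff₀' hρ]
    have := mul_nonneg hρ.le (condEnt_nonneg hr)
    linarith [expect_sDouble_fiber_le_right hp hr, condEnt_le hr]
  obtain ⟨f, size, drop⟩ : ∃ f : Module.End (ZMod 2) (Fvec n), kerSize f ≤ N * (L₁ * (K / ρ)) ∧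
      ε / 2 * K ≤ ent (push Prod.fst r) - ent (push f (push Prod.fst r)) := by
    refine exists_end_of_descent (Φ := fun f => ent (push f p)) (δ := ε / 4 * K)
      (by positivity) ?_ fun f small => ?_
    · rw [LinearMap.id_coe, push_id]
      refine ent_le.trans ((div_le_iff₀' hρ).2 ?_)
      nlinarith
    obtain ⟨w, hw, large_fiber⟩ := exists_le_sDouble_push_fiber hρ.le hp hr f
      (c := ε / 2 * K) (by linarith)
    have hfp := hp.push f
    have hfr := (hr.fiber hw).push f
    have fiber_nonneg := mul_nonneg hρ.le (add_nonneg (ent_nonneg hfp) (ent_nonneg hfr))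
    refine ⟨by linarith [sDouble_le_left hfp hfr], ?_⟩
    by_contra! never
    have := sDouble_lt n _ _ (K / ρ) hfp hfr ((ent_push_le hp f).trans ent_le) fun g hg => by
      have := never g hg
      rw [push_comp_end] at this
      linarith [(by field : ε * ρ / 4 * (K / ρ) = ε / 4 * K)]
    linarith [(by field : 2 * (ε * ρ / 4) * (K / ρ) = ε / 2 * K)]
  exact (incompressible f (size.trans_eq (by ring))).not_ge drop

theorem ExistsStA.exists_sCond_lt {ρ ε : ℝ} (hA : ExistsStA ρ) (hρ : 0 < ρ) (hε : 0 < ε) :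
    ∃ L, 0 ≤ L ∧ ∀ (n : ℕ) (β γ : Type*) [Finite β] [Finite γ] (r₁ : Fvec n × β → ℝ)
      (r₂ : Fvec n × γ → ℝ) (K : ℝ), IsDist r₁ → IsDist r₂ → ent (push Prod.fst r₂) ≤ K →
      Incompressible (L * K) (ε / 2 * K) (push Prod.fst r₂) →
      sCond r₁ r₂ < ρ * (condEnt r₁ + condEnt r₂) + ε * K := by
  obtain ⟨L, hL, average_lt⟩ := hA.exists_expect_sDouble_lt hρ hε
  refine ⟨L, hL, fun n β γ _ _ r₁ r₂ K h₁ h₂ fst_le incompressible => ?_⟩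
  by_contra! large
  have large_average : ε * K ≤ expect (push Prod.snd r₁) fun u =>
      expect (push Prod.snd r₂) (fun w => sDouble (fiber r₁ u) (fiber r₂ w)) -
        ρ * (ent (fiber r₁ u) + condEnt r₂) := by
    rw [expect_sub, ← sCond_eq_expect, expect_const_mul, expect_add,
      (h₁.push Prod.snd).expect_const, ← condEnt_eq_expect]
    linarith
  obtain ⟨u, hu, large_fiber⟩ := exists_le_of_le_expect (h₁.push _) large_average
  linarith [average_lt n γ _ r₂ K (h₁.fiber hu) h₂ fst_le incompressible]

theorem Incompressible.push {ℓ ℓ' δ : ℝ} {p : Fvec n → ℝ} (h : Incompressible (ℓ + ℓ') δ p)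
    (hp : IsDist p) {f : Module.End (ZMod 2) (Fvec n)} (hf : kerSize f ≤ ℓ') :
    Incompressible ℓ δ (push f p) := fun g hg => by
  have := h (g ∘ₗ f) (by linarith [kerSize_comp_le g f])
  rw [push_comp_end] at this
  linarith [ent_push_le hp f]

theorem ExistsStA.exists_expect_sDouble_lt_push {ρ ε : ℝ} (hA : ExistsStA ρ) (hρ : 0 < ρ)
    (hε : 0 < ε) :
    ∃ L, 0 ≤ L ∧ ∀ (n : ℕ) (β : Type*) [Finite β] (p : Fvec n → ℝ) (r : Fvec n × β → ℝ)
      (K ℓ : ℝ) (f : Module.End (ZMod 2) (Fvec n)), IsDist p → IsDist r →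
      ent (push Prod.fst r) ≤ K → kerSize f ≤ ℓ →
      Incompressible (L * K + ℓ) (ε / 2 * K) (push Prod.fst r) →
      expect (push Prod.snd r) (fun w => sDouble p (fiber r w)) <
        ρ * (ent (push f p) + condEnt r) + 3 / 2 * ε * K := by
  obtain ⟨L, hL, average_lt⟩ := hA.exists_expect_sDouble_lt hρ hε
  refine ⟨L, hL, fun n β _ p r K ℓ f hp hr fst_le size incompressible => ?_⟩
  have hK : 0 ≤ K := (ent_nonneg (hr.push _)).trans fst_le
  have fst_push : push Prod.fst (push (Prod.map f id) r) = push f (push Prod.fst r) := by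
    rw [push_push, push_push]
    rfl
  have push_lt := average_lt n β (push f p) (push (Prod.map f id) r) K (hp.push f) (hr.push _)
    (by rw [fst_push]; exact (ent_push_le (hr.push _) f).trans fst_le)
    (by rw [fst_push]; exact incompressible.push (hr.push _) size)
  rw [push_snd_push_map, expect_congr (hr.push _) fun w hw => by rw [fiber_push_map f hr hw]]
    at push_lt
  have drop_lt : ent (push Prod.fst r) - ent (push f (push Prod.fst r)) < ε / 2 * K :=
    incompressible f (by linarith [mul_nonneg hL hK])
  have condEnt_le : condEnt (push (Prod.map f id) r) ≤ condEnt r := by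
    rw [condEnt_push_map hr]
    exact expect_mono (hr.push _) fun w hw => ent_push_le (hr.fiber hw) f
  linarith [expect_sDouble_fiber_sub_push_le hp hr f, mul_le_mul_of_nonneg_left condEnt_le hρ.le]

theorem exists_sDouble_self_lt {η L₀ c ρ ε : ℝ} (hB : StA η L₀ c) (hη : 0 ≤ η)
    (hL₀ : 0 ≤ L₀) (hc : 0 < c) (hc' : c < 1) (hA : ExistsStA ρ) (hρ : 0 < ρ) (hε : 0 < ε) :
    ∃ L, 0 ≤ L ∧ ∀ (n : ℕ) (β : Type*) [Finite β] (p : Fvec n → ℝ) (r : Fvec n × β → ℝ) (K : ℝ),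
      IsDist p → IsDist r → ent (push Prod.fst r) ≤ K →
      Incompressible (L * K) (ε / 2 * K) (push Prod.fst r) →
      sDouble p p < 2 * η * ent p + 2 / (ρ * c) * (ρ * (ent p + condEnt r) + 3 / 2 * ε * K -
        expect (push Prod.snd r) fun w => sDouble p (fiber r w)) := by
  obtain ⟨L, hL, average_lt⟩ := hA.exists_expect_sDouble_lt_push hρ hε
  refine ⟨L + L₀ * (4 / ρ), by positivity, fun n β _ p r K hp hr fst_le incompressible => ?_⟩
  have hK : 0 ≤ K := (ent_nonneg (hr.push _)).trans fst_le
  by_contra! large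
  rw [add_mul] at incompressible
  have cross_lt (f : Module.End (ZMod 2) (Fvec n)) (hf : kerSize f ≤ L₀ * (4 / ρ) * K) :=
    average_lt n β p r K _ f hp hr fst_le hf incompressible
  have cross_lt_id := cross_lt LinearMap.id (by rw [kerSize_id]; positivity)
  rw [LinearMap.id_coe, push_id] at cross_lt_id
  have cross_le := (expect_sDouble_fiber_le_right hp hr).trans ((condEnt_le hr).trans fst_le)
  set cross := expect (push Prod.snd r) (fun w => sDouble p (fiber r w))
  have gap_nonneg : 0 ≤ 2 / (ρ * c) * (ρ * (ent p + condEnt r) + 3 / 2 * ε * K - cross) :=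
    mul_nonneg (by positivity) (by linarith)
  obtain ⟨f, size, drop⟩ := hB.exists_end hp hp (by linarith)
  have cross_ge : ρ * (ent p + condEnt r) + 3 / 2 * ε * K - ρ * c / 2 * ent p ≤ cross := by
    have gap_le : 2 / (ρ * c) * (ρ * (ent p + condEnt r) + 3 / 2 * ε * K - cross) ≤ ent p := by
      linarith [sDouble_le_left hp hp, mul_nonneg hη (ent_nonneg hp)]
    rw [div_mul_eq_mul_div, div_le_iff₀ (by positivity)] at gap_le
    linarith
  have ent_le : ent p ≤ 2 / ρ * K := by
    rw [div_mul_eq_mul_div, le_div_iff₀' hρ]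
    have := mul_nonneg hρ.le (condEnt_nonneg hr)
    have : 0 ≤ 3 / 2 * ε * K := by positivity
    have : ρ * ent p * c ≤ ρ * ent p * 1 := by
      gcongr
      exact mul_nonneg hρ.le (ent_nonneg hp)
    linarith
  have size_le : kerSize f ≤ L₀ * (4 / ρ) * K := by
    refine size.trans ?_
    rw [mul_assoc, (by ring : 4 / ρ * K = 2 / ρ * K + 2 / ρ * K)]
    gcongr
  nlinarith [cross_lt f size_le]

theorem exists_expect_sDouble_fiber_self_lt {η L₀ c ρ ε : ℝ} (hB : StA η L₀ c) (hη : 0 ≤ η)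
    (hL₀ : 0 ≤ L₀) (hc : 0 < c) (hc' : c < 1) (hA : ExistsStA ρ) (hρ : 0 < ρ) (hε : 0 < ε) :
    ∃ L, 0 ≤ L ∧ ∀ (n : ℕ) (β : Type*) [Finite β] (r : Fvec n × β → ℝ) (K b : ℝ),
      IsDist r → ent (push Prod.fst r) ≤ K →
      Incompressible (L * K) (ε / 2 * K) (push Prod.fst r) →
      2 * ρ * condEnt r ≤ sCond r r + b →
      expect (push Prod.snd r) (fun z => sDouble (fiber r z) (fiber r z)) <
        2 * η * condEnt r + 2 / (ρ * c) * (b + 3 / 2 * ε * K) := by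
  obtain ⟨L, hL, self_lt⟩ := exists_sDouble_self_lt hB hη hL₀ hc hc' hA hρ hε
  refine ⟨L, hL, fun n β _ r K b hr fst_le incompressible hb => ?_⟩
  by_contra! large
  have average : 0 ≤ expect (push Prod.snd r) fun z =>
      sDouble (fiber r z) (fiber r z) - (2 * η * ent (fiber r z) +
        2 / (ρ * c) * (ρ * (ent (fiber r z) + condEnt r) + 3 / 2 * ε * K -
          expect (push Prod.snd r) fun w => sDouble (fiber r z) (fiber r w))) := by
    have hM : 0 ≤ 2 / (ρ * c) := by positivity
    simp only [expect_add, expect_sub, expect_const_mul, ← sCond_eq_expect, ← condEnt_eq_expect,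
      (hr.push Prod.snd).expect_const]
    linarith [mul_le_mul_of_nonneg_left hb hM]
  obtain ⟨z, hz, large_fiber⟩ := exists_le_of_le_expect (hr.push _) average
  linarith [self_lt n β _ r K (hr.fiber hz) hr fst_le incompressible]

end Compression

section NearExtremal

/-- `p` and `q` have doubling mass at least the fraction `ρ` of their entropies, and pairs derived
from `p` and `q` by sums and fibers have doubling mass at most that fraction, all up to errors of
order `δ`. -/
structure NearExtremal {G : Type*} [AddCommGroup G] (ρ δ : ℝ) (p q : G → ℝ) : Prop where
  le_sDouble : ρ * (ent p + ent q) - 2 * δ ≤ sDouble p q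
  sCond_self_le : sCond (jointSum p p) (jointSum q q) ≤ ρ * (sDouble p p + sDouble q q) + δ
  sCond_cross_le : sCond (jointSum p q) (jointSum q p) ≤ ρ * (sDouble p q + sDouble q p) + δ
  sDouble_self_le :
    sDouble (conv q q) (conv p p) ≤ ρ * (ent (conv q q) + ent (conv p p)) + δ
  sDouble_cross_le :
    sDouble (conv p q) (conv p q) ≤ ρ * (ent (conv p q) + ent (conv p q)) + δ
  sDouble_total_le :
    sDouble (conv (conv p q) (conv p q)) (conv (conv p q) (conv p q)) ≤
      ρ * (ent (conv (conv p q) (conv p q)) + ent (conv (conv p q) (conv p q))) + δ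

namespace NearExtremal

variable {G : Type*} [AddCommGroup G] [Finite G] {ρ δ : ℝ} {p q : G → ℝ}
  (h : NearExtremal ρ δ p q) (hp : IsDist p) (hq : IsDist q)
include h hp hq

theorem ent_self_le : 2 * ent (conv p q) + ent (conv p p) + ent (conv q q) ≤
    ent (condSums p p q q) + ent (conv (conv p q) (conv p q)) + 6 * δ := by
  have le_sDouble := h.le_sDouble
  have sCond_le := h.sCond_self_le
  have sDouble_le := h.sDouble_self_le
  rw [sCond_jointSum hp hp hq hq, condEnt_condSums hp hp hq hq] at sCond_le
  simp only [sDouble, conv_conv_conv_comm q q p p, conv_comm q p] at le_sDouble sCond_le sDouble_le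
  linarith

theorem condEnt_ge : sDouble (conv p q) (conv p q) - 6 * δ ≤ condEnt (condSums p p q q) := by
  rw [condEnt_condSums hp hp hq hq, sDouble]
  linarith [h.ent_self_le hp hq]

variable [Module (ZMod 2) G]

theorem ent_cross_ge :
    2 * (ent p + ent q) - 2 * ρ * sDouble p q - δ ≤ ent (condSums p p q q) := by
  have sCond_le := h.sCond_cross_le
  rw [sCond_jointSum hp hq hq hp, condEnt_condSums hp hq hq hp,
    ent_condSums_rotate hp hp hq hq] at sCond_le
  simp only [sDouble, conv_comm q p] at sCond_le ⊢
  linarith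

theorem ent_cross_le : 4 * ent (conv p q) ≤
    ent (condSums p p q q) + ent (conv (conv p q) (conv p q)) + 6 * δ := by
  have le_sDouble := h.le_sDouble
  have sDouble_le := h.sDouble_cross_le
  have ent_ge := h.ent_cross_ge hp hq
  simp only [sDouble] at le_sDouble sDouble_le ent_ge
  linarith

theorem sDouble_conv_ge :
    2 * (1 - ρ) * sDouble p q - δ ≤ sDouble (conv p q) (conv p q) := by
  have condEnt_le := condEnt_condSums_le hp hq hq hp
  rw [condEnt_condSums hp hq hq hp, ent_condSums_rotate hp hp hq hq, conv_comm q p] at condEnt_le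
  have ent_ge := h.ent_cross_ge hp hq
  simp only [sDouble] at condEnt_le ent_ge ⊢
  linarith

theorem le_condEnt (hρ : ρ ≤ 1 / 2) :
    ρ * (ent p + ent q) - 9 * δ ≤ condEnt (condSums p p q q) := by
  have : sDouble p q ≤ 2 * (1 - ρ) * sDouble p q :=
    le_mul_of_one_le_left (sDouble_nonneg hp hq) (by linarith)
  linarith [h.le_sDouble, h.sDouble_conv_ge hp hq, h.condEnt_ge hp hq]

theorem le_expect_sDouble_fiber :
    condEnt (condSums p p q q) - 18 * δ ≤ expect (push Prod.snd (condSums p p q q)) fun z =>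
      sDouble (fiber (condSums p p q q) z) (fiber (condSums p p q q) z) := by
  simp only [sDouble, expect_sub, expect_add, ← condEnt_eq_expect]
  rw [condEnt_condSums hp hp hq hq]
  linarith [expect_ent_conv_fiber_condSums_le hp hq, h.ent_self_le hp hq, h.ent_cross_le hp hq]

theorem mul_condEnt_le_sCond (hρ : 0 ≤ ρ) (hρ' : ρ ≤ 1) (hδ : 0 ≤ δ) :
    2 * ρ * condEnt (condSums p p q q) ≤
      sCond (condSums p p q q) (condSums p p q q) + 23 * δ := by
  have hR := hp.condSums hp hq hq
  have hT := hp.conv hq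
  have condEnt_le : condEnt (sumJoint (condSums p p q q) (condSums p p q q)) ≤
      2 * ρ * ent (conv (conv p q) (conv p q)) + δ :=
    calc
      _ ≤ condEnt (condSums (conv p q) (conv p q) (conv p q) (conv p q)) := by
        change _ ≤ condEnt (sumJoint (jointSum _ _) (jointSum _ _))
        rw [← push_fst_add_condSums]
        exact condEnt_sumJoint_le_map hR hR (fun z => z.1 + z.2) fun z => z.1 + z.2
      _ ≤ _ := condEnt_condSums_le hT hT hT hT
      _ ≤ _ := by linarith [h.sDouble_total_le]
  have le_sDouble := h.le_sDouble
  have sDouble_ge := h.sDouble_conv_ge hp hq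
  have condEnt_ge := mul_le_mul_of_nonneg_left (h.condEnt_ge hp hq) (sub_nonneg.2 hρ')
  simp only [sDouble] at le_sDouble sDouble_ge condEnt_ge
  have total_le : ent (conv (conv p q) (conv p q)) ≤ 2 * (1 - ρ) * ent (conv p q) + 5 * δ := by
    linarith
  rw [sCond_eq hR hR]
  linarith [total_le, mul_nonneg hρ hδ]

end NearExtremal

end NearExtremal

section Bootstrap

/-- The total entropy of the sums of copies of `p` and `q` whose compression would contradict
near-extremality. It is the quantity decreased when the exponent in `ExistsStA` is improved. -/
def potential {G : Type*} [AddGroup G] (p q : G → ℝ) : ℝ :=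
  ent q + ent (conv p q) + ent (conv q q) + ent (conv (conv p q) (conv p q))

variable {n : ℕ} {p q : Fvec n → ℝ}

theorem potential_nonneg {G : Type*} [AddCommGroup G] [Finite G] {p q : G → ℝ} (hp : IsDist p)
    (hq : IsDist q) : 0 ≤ potential p q := by
  have hT := hp.conv hq
  have := ent_nonneg hq
  have := ent_nonneg hT
  have := ent_nonneg (hq.conv hq)
  have := ent_nonneg (hT.conv hT)
  rw [potential]
  positivity

theorem potential_le {G : Type*} [AddCommGroup G] [Finite G] {p q : G → ℝ} (hp : IsDist p)
    (hq : IsDist q) : potential p q ≤ 6 * (ent p + ent q) := by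
  have hT := hp.conv hq
  rw [potential]
  linarith [ent_nonneg hp, ent_conv_le hp hq, ent_conv_le hq hq, ent_conv_le hT hT]

theorem Incompressible.mono {ℓ ℓ' δ : ℝ} (h : Incompressible ℓ δ p) (le : ℓ' ≤ ℓ) :
    Incompressible ℓ' δ p :=
  fun f hf => h f (hf.trans le)

theorem incompressible_of_potential (hp : IsDist p) (hq : IsDist q) {ℓ δ : ℝ}
    (h : ∀ f : Module.End (ZMod 2) (Fvec n), kerSize f ≤ ℓ →
      potential p q - potential (push f p) (push f q) < δ) :
    Incompressible ℓ δ q ∧ Incompressible ℓ δ (conv p q) ∧ Incompressible ℓ δ (conv q q) ∧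
      Incompressible ℓ δ (conv (conv p q) (conv p q)) := by
  have hT := hp.conv hq
  have drops (f : Module.End (ZMod 2) (Fvec n)) (hf : kerSize f ≤ ℓ) := h f hf
  simp only [potential, ← push_conv] at drops
  refine ⟨fun f hf => ?_, fun f hf => ?_, fun f hf => ?_, fun f hf => ?_⟩ <;>
    linarith [drops f hf, ent_push_le hq f, ent_push_le hT f, ent_push_le (hq.conv hq) f,
      ent_push_le (hT.conv hT) f]

theorem ExistsStA.exists_nearExtremal {ρ ε : ℝ} (hA : ExistsStA ρ) (hρ : 0 < ρ) (hε : 0 < ε) :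
    ∃ L, 0 ≤ L ∧ ∀ (n : ℕ) (p q : Fvec n → ℝ) (K : ℝ), K = ent p + ent q → IsDist p → IsDist q →
      ρ * K - 2 * (ε * K) ≤ sDouble p q →
      (∀ f : Module.End (ZMod 2) (Fvec n), kerSize f ≤ L * K →
        potential p q - potential (push f p) (push f q) < ε / 2 * K) →
      NearExtremal ρ (ε * K) p q := by
  obtain ⟨L₁, hL₁, sCond_lt⟩ := hA.exists_sCond_lt hρ hε
  obtain ⟨L₂, hL₂, sDouble_lt⟩ := hA.exists_sDouble_lt hρ (show 0 < ε / 4 by positivity)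
  refine ⟨L₁ + L₂ * 2, by positivity, fun n p q K hK hp hq large drop_lt => ?_⟩
  have hT := hp.conv hq
  have p_nonneg := ent_nonneg hp
  have q_nonneg := ent_nonneg hq
  have K_nonneg : 0 ≤ K := by linarith
  have ent_T_le := ent_conv_le hp hq
  obtain ⟨inc_q, inc_T, inc_qq, inc_TT⟩ := incompressible_of_potential hp hq drop_lt
  have sCond_le {r₁ r₂ : Fvec n × Fvec n → ℝ} (h₁ : IsDist r₁) (h₂ : IsDist r₂)
      (fst : push Prod.fst r₂ = q) : sCond r₁ r₂ ≤ ρ * (condEnt r₁ + condEnt r₂) + ε * K := by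
    refine (sCond_lt n _ _ r₁ r₂ K h₁ h₂ ?_ ?_).le <;> rw [fst]
    · linarith
    · exact inc_q.mono (by gcongr; linarith)
  have sDouble_le {p' q' : Fvec n → ℝ} (hp' : IsDist p') (hq' : IsDist q')
      (ent_le : ent p' ≤ 2 * K) (inc : Incompressible ((L₁ + L₂ * 2) * K) (ε / 2 * K) p') :
      sDouble p' q' ≤ ρ * (ent p' + ent q') + ε * K := by
    have inc' : Incompressible (L₂ * (2 * K)) (ε / 4 * (2 * K)) p' := by
      rw [(by ring : ε / 4 * (2 * K) = ε / 2 * K)]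
      exact inc.mono (by linarith [mul_nonneg hL₁ K_nonneg])
    linarith [sDouble_lt n p' q' (2 * K) hp' hq' ent_le inc']
  refine ⟨hK ▸ large, ?_, ?_, sDouble_le (hq.conv hq) (hp.conv hp) ?_ inc_qq,
    sDouble_le hT hT ?_ inc_T, sDouble_le (hT.conv hT) (hT.conv hT) ?_ inc_TT⟩
  · rw [← condEnt_jointSum hp hp, ← condEnt_jointSum hq hq]
    exact sCond_le (hp.jointSum hp) (hq.jointSum hq) (push_fst_jointSum hq)
  · rw [← condEnt_jointSum hp hq, ← condEnt_jointSum hq hp]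
    exact sCond_le (hp.jointSum hq) (hq.jointSum hp) (push_fst_jointSum hp)
  · linarith [ent_conv_le hq hq]
  · linarith
  · linarith [ent_conv_le hT hT]

theorem StA.exists_potential_drop {η L₀ c κ : ℝ} (hB : StA η L₀ c) (hη : 0 ≤ η) (hη' : η < 1 / 2)
    (hL₀ : 0 ≤ L₀) (hc : 0 < c) (hc' : c < 1) (hκ : 0 < κ) :
    ∃ ε, 0 < ε ∧ ∀ ρ, κ ≤ ρ → ρ ≤ 1 / 2 → ExistsStA ρ →
      ∃ L, 0 ≤ L ∧ ∀ (n : ℕ) (p q : Fvec n → ℝ), IsDist p → IsDist q →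
        ρ * (ent p + ent q) - 2 * (ε * (ent p + ent q)) ≤ sDouble p q →
        ∃ f : Module.End (ZMod 2) (Fvec n), kerSize f ≤ L * (ent p + ent q) ∧
          ε / 2 * (ent p + ent q) ≤ potential p q - potential (push f p) (push f q) := by
  have gap : 0 < 1 - 2 * η := by linarith
  set ε := (1 - 2 * η) * κ / (27 + 49 / (κ * c)) with hε_def
  have hε : 0 < ε := by positivity
  refine ⟨ε, hε, fun ρ hκρ hρ' hA => ?_⟩
  have hρ : 0 < ρ := hκ.trans_le hκρ
  obtain ⟨L₁, hL₁, nearExtremal⟩ := hA.exists_nearExtremal hρ hε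
  obtain ⟨L₂, hL₂, average_lt⟩ :=
    exists_expect_sDouble_fiber_self_lt hB hη hL₀ hc hc' hA hρ hε
  refine ⟨L₁ + L₂, by positivity, fun n p q hp hq large => ?_⟩
  by_contra! never
  have hK : 0 ≤ ent p + ent q := add_nonneg (ent_nonneg hp) (ent_nonneg hq)
  set K := ent p + ent q with hK_def
  have hε' : ε * (27 + 49 / (κ * c)) = (1 - 2 * η) * κ := by rw [hε_def]; field
  have h := nearExtremal n p q K hK_def hp hq large fun f hf =>
    never f (hf.trans (by gcongr; linarith))
  obtain ⟨-, inc_T, -⟩ := incompressible_of_potential hp hq never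
  have hR := hp.condSums hp hq hq
  have lower := h.le_expect_sDouble_fiber hp hq
  have upper := average_lt n _ (condSums p p q q) K (23 * (ε * K)) hR
    (by rw [push_fst_condSums hp hq]; exact ent_conv_le hp hq)
    (by rw [push_fst_condSums hp hq]; exact inc_T.mono (by gcongr; linarith))
    (h.mul_condEnt_le_sCond hp hq hρ.le (by linarith) (by positivity))
  have condEnt_ge := mul_le_mul_of_nonneg_left (h.le_condEnt hp hq hρ') gap.le
  have coeff_le : 2 / (ρ * c) * (23 * (ε * K) + 3 / 2 * ε * K) ≤ 49 / (κ * c) * (ε * K) :=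
    calc
      _ = 49 / (ρ * c) * (ε * K) := by ring
      _ ≤ _ := by gcongr
  have : κ * K ≤ ρ * K := by gcongr
  nlinarith [mul_nonneg hη hK]

theorem stA_of_exists_end {η L c : ℝ}
    (h : ∀ (n : ℕ) (p q : Fvec n → ℝ), IsDist p → IsDist q → η * (ent p + ent q) ≤ sDouble p q →
      ∃ f : Module.End (ZMod 2) (Fvec n), kerSize f ≤ L * (ent p + ent q) ∧
        ent (push f p) + ent (push f q) ≤ (1 - c) * (ent p + ent q)) : StA η L c := by
  intro n p q hp hq le
  obtain ⟨f, size, drop⟩ := h n p q hp hq (by rw [sDouble]; linarith)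
  refine ⟨LinearMap.ker f, ?_, ?_⟩
  · rwa [ent_unifOn ⟨0, zero_mem _⟩]
  · rwa [ent_push_mkQ_ker f hp, ent_push_mkQ_ker f hq]

theorem existsStA_sub_of_potential_drop {ρ ε L : ℝ} (hρ : 0 ≤ ρ) (hε : 0 < ε) (hL : 0 ≤ L)
    (h : ∀ (n : ℕ) (p q : Fvec n → ℝ), IsDist p → IsDist q →
      ρ * (ent p + ent q) - 2 * (ε * (ent p + ent q)) ≤ sDouble p q →
      ∃ f : Module.End (ZMod 2) (Fvec n), kerSize f ≤ L * (ent p + ent q) ∧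
        ε / 2 * (ent p + ent q) ≤ potential p q - potential (push f p) (push f q)) :
    ExistsStA (ρ - ε) := by
  obtain ⟨N, hN⟩ := exists_nat_ge (24 / ε)
  rw [div_le_iff₀ hε] at hN
  set c := ε / (1 + 2 * ε) with hc_def
  have hc : 0 < c := by positivity
  have hc' : c * (1 + 2 * ε) = ε := by rw [hc_def]; field
  have c_le : c ≤ 1 / 2 := by rw [hc_def, div_le_iff₀ (by positivity)]; linarith
  refine ⟨N * L, c, by positivity, hc, by linarith,
    stA_of_exists_end fun n p q hp hq large => ?_⟩
  have hK : 0 ≤ ent p + ent q := add_nonneg (ent_nonneg hp) (ent_nonneg hq)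
  rw [mul_assoc]
  refine exists_end_of_descent (Φ := fun f => potential (push f p) (push f q))
    (δ := ε / 4 * (ent p + ent q)) (by positivity) ?_ fun f unfinished => ?_
  · rw [LinearMap.id_coe, push_id, push_id]
    nlinarith [potential_le hp hq]
  have hfp := hp.push f
  have hfq := hq.push f
  have le_sum := add_le_add (ent_push_le hp f) (ent_push_le hq f)
  have ge_half : (ent p + ent q) / 2 ≤ ent (push f p) + ent (push f q) := by nlinarith
  have large_push : ρ * (ent (push f p) + ent (push f q)) -
      2 * (ε * (ent (push f p) + ent (push f q))) ≤ sDouble (push f p) (push f q) := by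
    have : ρ * (ent (push f p) + ent (push f q)) ≤ ρ * (ent p + ent q) := by gcongr
    nlinarith [sDouble_sub_sDouble_push_le_left hp hq f, ent_push_le hq f]
  obtain ⟨g, size, drop⟩ := h n _ _ hfp hfq large_push
  simp only [push_comp_end]
  refine ⟨?_, g, size.trans (by gcongr), ?_⟩
  · have : 0 < ent (push f p) + ent (push f q) := by nlinarith
    have : 0 < ε / 2 * (ent (push f p) + ent (push f q)) := by positivity
    linarith [potential_nonneg (hfp.push g) (hfq.push g)]
  · nlinarith

theorem existsStA_of_pos {η : ℝ} (hη : 0 < η) : ExistsStA η := by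
  have base : ExistsStA (499 / 1000) := ⟨2, 1 / 10, by norm_num, by norm_num, by norm_num, stA_base⟩
  obtain large | small := le_total (499 / 1000) η
  · exact base.mono large
  obtain ⟨ε, hε, potential_drop⟩ := stA_base.exists_potential_drop (by norm_num) (by norm_num)
    (by norm_num) (by norm_num) (by norm_num) hη
  have iterate (j : ℕ) : ExistsStA (max η (499 / 1000 - j * ε)) := by
    induction j with
    | zero => exact base.mono (by simp)
    | succ j ih =>
      have le_half : max η (499 / 1000 - j * ε) ≤ 1 / 2 :=
        max_le (by linarith) (by linarith [mul_nonneg j.cast_nonneg hε.le])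
      obtain ⟨L, hL, drop⟩ := potential_drop _ (le_max_left _ _) le_half ih
      refine (existsStA_sub_of_potential_drop (hη.le.trans (le_max_left _ _)) hε hL drop).mono ?_
      rw [← max_sub_sub_right]
      exact max_le_max (by linarith) (by push_cast; linarith)
  obtain ⟨N, hN⟩ := exists_nat_ge (499 / 1000 / ε)
  rw [div_le_iff₀ hε] at hN
  exact (iterate N).mono (max_le le_rfl (by linarith))

end Bootstrap

theorem exists_end_sDouble_le {ε : ℝ} (hε : 0 < ε) :
    ∃ L, 0 ≤ L ∧ ∀ (n : ℕ) (p q : Fvec n → ℝ), IsDist p → IsDist q →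
      ∃ f : Module.End (ZMod 2) (Fvec n), kerSize f ≤ L * (ent p + ent q) ∧
        sDouble (push f p) (push f q) ≤ ε * (ent p + ent q) := by
  obtain ⟨L, c, hL, hc, -, hA⟩ := existsStA_of_pos hε
  obtain ⟨N, hN⟩ := exists_nat_ge (1 / (c * ε))
  rw [div_le_iff₀ (by positivity)] at hN
  refine ⟨N * L, by positivity, fun n p q hp hq => ?_⟩
  have hK : 0 ≤ ent p + ent q := add_nonneg (ent_nonneg hp) (ent_nonneg hq)
  rw [mul_assoc]
  refine exists_end_of_descent (Φ := fun f => ent (push f p) + ent (push f q))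
    (δ := c * ε * (ent p + ent q)) (by positivity) ?_ fun f large => ?_
  · rw [LinearMap.id_coe, push_id, push_id, ← mul_assoc]
    exact le_mul_of_one_le_left hK hN
  rw [not_le] at large
  have hfp := hp.push f
  have hfq := hq.push f
  have le_sum := add_le_add (ent_push_le hp f) (ent_push_le hq f)
  have sum_gt : ε * (ent p + ent q) < ent (push f p) + ent (push f q) := by
    linarith [sDouble_le_left hfp hfq, ent_nonneg hfq]
  obtain ⟨g, size, drop⟩ :=
    hA.exists_end hfp hfq (large.le.trans' (mul_le_mul_of_nonneg_left le_sum hε.le))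
  simp only [push_comp_end]
  exact ⟨by nlinarith, g, size.trans (by gcongr), by nlinarith⟩

theorem mkQ_preimage_singleton {R M : Type*} [Ring R] [AddCommGroup M] [Module R M]
    (V : Submodule R M) (a : M) : V.mkQ ⁻¹' {V.mkQ a} = (V : Set M) + {a} := by
  ext b
  simp [Submodule.Quotient.eq, sub_eq_add_neg]

/-- For all `ε > 0` there is `L > 0` such that for any finite nonempty
`A ⊆ 𝔽₂ⁿ` with `|A+A| = |A|^(2−η)`, there is a subspace `V` with `|V| ≤ |A|^L` and
`𝔼_{a ∈ A} log |A ∩ (V + a)| ≥ (η − ε) log |A|`. -/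
theorem statement0 :
    ∀ ε : ℝ, 0 < ε → ∃ L : ℝ, 0 < L ∧
      ∀ (n : ℕ) (A : Finset (Fvec n)), A.Nonempty →
        ∀ η : ℝ, ((A + A).card : ℝ) = (A.card : ℝ) ^ (2 - η) →
          ∃ V : Submodule (ZMod 2) (Fvec n),
            (Nat.card V : ℝ) ≤ (A.card : ℝ) ^ L ∧
            (A.card : ℝ)⁻¹ *
                ∑ a ∈ A, Real.log (((A : Set (Fvec n)) ∩ ((V : Set (Fvec n)) + {a})).ncard) ≥
              (η - ε) * Real.log A.card := by
  intro ε hε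
  obtain ⟨L, hL, exists_end⟩ := exists_end_sDouble_le (half_pos hε)
  refine ⟨2 * L + 1, by positivity, fun n A hA η hη => ?_⟩
  have hp : IsDist (unifOn (A : Set (Fvec n))) := isDist_unifOn (Finset.coe_nonempty.2 hA)
  have ent_A : ent (unifOn (A : Set (Fvec n))) = log A.card := by
    simpa using ent_unifOn (Finset.coe_nonempty.2 hA)
  have card_pos : (0 : ℝ) < A.card := by exact_mod_cast hA.card_pos
  obtain ⟨f, size, sDouble_le⟩ := exists_end n _ _ hp hp
  have nonneg := ent_nonneg hp
  refine ⟨LinearMap.ker f, ?_, ?_⟩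
  · rw [← log_le_log_iff (mod_cast Nat.card_pos) (by positivity), log_rpow card_pos, ← ent_A]
    exact size.trans (by linarith)
  · have sDouble_ge : η * log A.card ≤ sDouble (unifOn (A : Set (Fvec n))) (unifOn A) := by
      have := ent_conv_unifOn_le hA hA
      rw [hη, log_rpow card_pos] at this
      rw [sDouble, ent_A]
      linarith
    simp only [← mkQ_preimage_singleton]
    rw [← ent_unifOn_sub_ent_push hA, ent_push_mkQ_ker f hp, ← ent_A, ge_iff_le]
    rw [← ent_A] at sDouble_ge
    linarith [sDouble_sub_sDouble_push_le_left hp hp f]
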